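/- arXiv:math/0703473 — 4 statements merged into one kernel-verified Lean document; each statement's English description precedes it below -/
import Mathlib

section
/- Let k, l, m ≥ 1 be integers with 1/(2k) + 1/(2l) + 1/(2m+1) < 1, and let Δ = Δ(2k, 2l, 2m+1) with canonical generators c₀, c₁, c₂ (so the first two link periods are even and the third is odd). Then c₀ is conjugate to c₂ in Δ; the centralizer of c₀ in Δ equals the subgroup generated by c₀, (c₀c₁)^k, and (c₂c₀)^m (c₂c₁)^l (c₀c₂)^m; and the centralizer of c₁ in Δ equals the subgroup generated by c₁, (c₀c₁)^k, and (c₁c₂)^l. -/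
/-- Relators for the reflection group
`⟨c₀,c₁,c₂ ∣ c₀² = c₁² = c₂² = (c₀c₁)^k' = (c₁c₂)^l' = (c₂c₀)^m' = 1⟩`. -/
def triRels (k' l' m' : ℕ) : Set (FreeGroup (Fin 3)) :=
  {FreeGroup.of 0 ^ 2, FreeGroup.of 1 ^ 2, FreeGroup.of 2 ^ 2,
   (FreeGroup.of 0 * FreeGroup.of 1) ^ k',
   (FreeGroup.of 1 * FreeGroup.of 2) ^ l',
   (FreeGroup.of 2 * FreeGroup.of 0) ^ m'}

/-- The group `Δ(k', l', m')` with the above presentation. -/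
def Tri (k' l' m' : ℕ) : Type := PresentedGroup (triRels k' l' m')

instance (k' l' m' : ℕ) : Group (Tri k' l' m') :=
  inferInstanceAs (Group (PresentedGroup (triRels k' l' m')))

/-- The canonical generators `c₀, c₁, c₂` of `Δ(k', l', m')`. -/
def cgen (k' l' m' : ℕ) (j : Fin 3) : Tri k' l' m' :=
  PresentedGroup.of (rels := triRels k' l' m') j

/-!
`Δ(2k, 2l, 2m+1)` is a Coxeter group whose diagram has a single odd edge, joining `c₀` and `c₂`.
Suppose `w sᵢ = sⱼ w` in a Coxeter group and `sₐ ≠ sᵢ` is a right descent of `w` while `sᵢ` is not.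
Then both `sₐ` and `sᵢ` are right descents of `w sᵢ = sⱼ w`, so `w sᵢ` ends in the longest element
of the dihedral group `⟨sᵢ, sₐ⟩`, which is therefore finite. Cancelling `sᵢ` leaves a shorter
element times an alternating word of length `M i a - 1`. Up to a factor `sᵢ` this word is a power of
`sᵢ sₐ`, which commutes with `sᵢ` when `M i a` is even and carries `sᵢ` to `sₐ` when `M i a` is odd.
Iterating expresses `w` through the half-turns `(sᵢ sₐ) ^ (M i a / 2)` along even edges and the
moves along odd edges. With a single odd edge the moves cancel in pairs, conjugating the half-turns
at `c₂` into the centralizer of `c₀`.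

The step from two descents to the longest element rests on two classical facts: `sᵢ sₐ` has order
exactly `M i a`, by the geometric representation, and the strong exchange property, by the action
on signed reflections.
-/

section ReflectionPair

open Module Polynomial Polynomial.Chebyshev Real

theorem reflection_mul_reflection_pow_apply_eq_chebyshev {R V : Type*} [CommRing R]
    [AddCommGroup V] [Module R V] {x y : V} {f g : Dual R V} {c : R}
    (hfx : f x = 2) (hgy : g y = 2) (hfy : f y = -2 * c) (hgx : g x = -2 * c) (n : ℕ) :
    ((reflection hfx * reflection hgy) ^ n) x =
      (U R (2 * n)).eval c • x + (U R (2 * n - 1)).eval c • y := by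
  induction n with
  | zero => simp
  | succ n ih =>
    have odd_step : (U R (2 * n + 1)).eval c =
        2 * c * (U R (2 * n)).eval c - (U R (2 * n - 1)).eval c := by
      simp [U_add_one]
    have even_step : (U R (2 * n + 2)).eval c =
        2 * c * (U R (2 * n + 1)).eval c - (U R (2 * n)).eval c := by
      simp [U_add_two]
    rw [pow_succ', LinearEquiv.mul_apply, ih, Nat.cast_succ, mul_add_one,
      show (2 * n + 2 - 1 : ℤ) = 2 * n + 1 by ring, even_step, odd_step]
    simp only [LinearEquiv.mul_apply, reflection_apply, map_add, map_sub, map_smul, hfx, hgy, hfy,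
      hgx]
    module

theorem sin_pi_div_ne_zero {N : ℕ} (hN : 2 ≤ N) : sin (π / N) ≠ 0 := by
  have hN' : (1 : ℝ) < N := by exact_mod_cast hN
  exact (sin_pos_of_pos_of_lt_pi (by positivity) (div_lt_self pi_pos hN')).ne'

theorem dvd_of_eval_U_cos_pi_div {N n : ℕ} (hodd : (U ℝ (2 * n - 1)).eval (cos (π / N)) = 0)
    (heven : (U ℝ (2 * n)).eval (cos (π / N)) = 1) : N ∣ n := by
  obtain rfl | rfl | hN : N = 0 ∨ N = 1 ∨ 2 ≤ N := by lia
  · simpa [U_eval_one] using hodd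
  · exact one_dvd n
  have hsin := U_real_cos (π / N) (2 * n)
  have hsin' := U_real_cos (π / N) (2 * n - 1)
  push_cast at hsin hsin'
  rw [hodd, zero_mul, sub_add_cancel] at hsin'
  rw [heven, one_mul, add_one_mul, sin_add, ← hsin', zero_mul, zero_add] at hsin
  have hcos : cos (2 * n * (π / N)) = 1 :=
    mul_right_cancel₀ (sin_pi_div_ne_zero hN) (by rw [← hsin, one_mul])
  obtain ⟨z, hz⟩ := (cos_eq_one_iff _).mp hcos
  have hz' : (n : ℝ) = N * z := by
    have : (N : ℝ) ≠ 0 := by positivity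
    field_simp at hz
    linarith
  exact Int.natCast_dvd_natCast.mp ⟨z, by exact_mod_cast hz'⟩

theorem eval_U_two_mul_cos_pi_div {N : ℕ} (hN : 2 ≤ N) : (U ℝ (2 * N)).eval (cos (π / N)) = 1 := by
  refine mul_right_cancel₀ (sin_pi_div_ne_zero hN) ?_
  rw [U_real_cos]
  push_cast
  rw [add_one_mul, mul_assoc, mul_div_cancel₀ π (by positivity), add_comm, sin_add_two_pi, one_mul]

theorem eval_U_two_mul_sub_one_cos_pi_div {N : ℕ} (hN : 2 ≤ N) :
    (U ℝ (2 * N - 1)).eval (cos (π / N)) = 0 := by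
  refine (mul_eq_zero.mp ?_).resolve_right (sin_pi_div_ne_zero hN)
  rw [U_real_cos]
  push_cast
  rw [sub_add_cancel, mul_assoc, mul_div_cancel₀ π (by positivity), sin_two_pi]

theorem exists_sub_smul_add_smul_mem_ker {K V : Type*} [Field K] [AddCommGroup V] [Module K V]
    {x y : V} {f g : Dual K V} (hdet : f x * g y - f y * g x ≠ 0) (z : V) :
    ∃ a b : K, f (z - (a • x + b • y)) = 0 ∧ g (z - (a • x + b • y)) = 0 := by
  generalize hD : f x * g y - f y * g x = D at hdet
  refine ⟨(f z * g y - f y * g z) / D, (f x * g z - f z * g x) / D, ?_, ?_⟩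
  · simp only [map_sub, map_add, map_smul, smul_eq_mul]
    field_simp
    linear_combination -f z * hD
  · simp only [map_sub, map_add, map_smul, smul_eq_mul]
    field_simp
    linear_combination -g z * hD

variable {V : Type*} [AddCommGroup V] [Module ℝ V] {x y : V} {f g : Dual ℝ V} {N : ℕ}

theorem reflection_mul_reflection_pow_eq_one (hfx : f x = 2) (hgy : g y = 2)
    (hfy : f y = -2 * cos (π / N)) (hgx : g x = -2 * cos (π / N)) (hN : N ≠ 1) :
    (reflection hfx * reflection hgy) ^ N = 1 := by
  obtain rfl | hN : N = 0 ∨ 2 ≤ N := by lia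
  · exact pow_zero _
  have fix_x : ((reflection hfx * reflection hgy) ^ N) x = x := by
    rw [reflection_mul_reflection_pow_apply_eq_chebyshev hfx hgy hfy hgx,
      eval_U_two_mul_cos_pi_div hN, eval_U_two_mul_sub_one_cos_pi_div hN, one_smul, zero_smul,
      add_zero]
  have fix_y : ((reflection hfx * reflection hgy) ^ N) y = y := by
    have hinv : (reflection hfx * reflection hgy)⁻¹ = reflection hgy * reflection hfx := by
      rw [mul_inv_rev, reflection_inv, reflection_inv]
    rw [← inv_inv (reflection hfx * reflection hgy), inv_pow, hinv]
    refine (LinearEquiv.symm_apply_eq _).mpr ?_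
    rw [reflection_mul_reflection_pow_apply_eq_chebyshev hgy hfx hgx hfy,
      eval_U_two_mul_cos_pi_div hN, eval_U_two_mul_sub_one_cos_pi_div hN, one_smul, zero_smul,
      add_zero]
  have fix_ker : ∀ z, f z = 0 → g z = 0 → ((reflection hfx * reflection hgy) ^ N) z = z := by
    intro z hf hg
    have : (reflection hfx * reflection hgy) z = z := by simp [reflection_apply, hf, hg]
    rw [LinearEquiv.pow_apply]
    exact Function.iterate_fixed this N
  have hdet : f x * g y - f y * g x ≠ 0 := by
    have : f x * g y - f y * g x = 4 * sin (π / N) ^ 2 := by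
      rw [hfx, hgy, hfy, hgx, sin_sq]
      ring
    rw [this]
    exact mul_ne_zero four_ne_zero (pow_ne_zero 2 (sin_pi_div_ne_zero hN))
  ext z
  obtain ⟨a, b, hf, hg⟩ := exists_sub_smul_add_smul_mem_ker hdet z
  have := fix_ker _ hf hg
  rwa [map_sub, map_add, map_smul, map_smul, fix_x, fix_y, sub_left_inj] at this

theorem dvd_of_reflection_mul_reflection_pow_eq_one (hfx : f x = 2) (hgy : g y = 2)
    (hfy : f y = -2 * cos (π / N)) (hgx : g x = -2 * cos (π / N))
    (hxy : LinearIndependent ℝ ![x, y]) {n : ℕ}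
    (h : (reflection hfx * reflection hgy) ^ n = 1) : N ∣ n := by
  have hx := reflection_mul_reflection_pow_apply_eq_chebyshev hfx hgy hfy hgx n
  rw [h, LinearEquiv.coe_one, id, ← sub_eq_zero] at hx
  have hcoeff := LinearIndependent.pair_iff.mp hxy
    (1 - (U ℝ (2 * n)).eval (cos (π / N))) (-(U ℝ (2 * n - 1)).eval (cos (π / N)))
    (by rw [← hx]; module)
  exact dvd_of_eval_U_cos_pi_div (neg_eq_zero.mp hcoeff.2) (sub_eq_zero.mp hcoeff.1).symm

end ReflectionPair

section GeometricRepresentation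

variable {B W : Type*} [Group W] {M : CoxeterMatrix B}

/-- The coroot `2⟨eᵢ, ·⟩` of the `i`-th simple root `eᵢ` in the standard geometric representation
of a Coxeter group, where `⟨eᵢ, eⱼ⟩ = -cos (π / M i j)`. The entry `M i j = 0` encodes infinite
order, and `π / 0 = 0` gives it the form value `-1` it has in the literature. -/
noncomputable def simpleCoroot (M : CoxeterMatrix B) (i : B) : Module.Dual ℝ (B →₀ ℝ) :=
  Finsupp.linearCombination ℝ fun j => -2 * Real.cos (Real.pi / M i j)

theorem simpleCoroot_single (i j : B) :
    simpleCoroot M i (.single j 1) = -2 * Real.cos (Real.pi / M i j) := by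
  simp [simpleCoroot]

theorem simpleCoroot_single_self (i : B) : simpleCoroot M i (.single i 1) = 2 := by
  simp [simpleCoroot_single]

/-- The reflection by which the `i`-th simple generator acts in the standard geometric
representation. -/
noncomputable def simpleReflection (M : CoxeterMatrix B) (i : B) : (B →₀ ℝ) ≃ₗ[ℝ] (B →₀ ℝ) :=
  Module.reflection (simpleCoroot_single_self (M := M) i)

theorem isLiftable_simpleReflection : M.IsLiftable (simpleReflection M) := by
  intro i j
  by_cases hij : i = j
  · subst hij
    rw [M.diagonal, pow_one, mul_eq_one_iff_eq_inv]
    exact (Module.reflection_inv _).symm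
  · exact reflection_mul_reflection_pow_eq_one _ _ (simpleCoroot_single i j)
      (by rw [simpleCoroot_single, M.symmetric]) (M.off_diagonal i j hij)

theorem orderOf_simple_mul_simple (cs : CoxeterSystem M W) (i j : B) :
    orderOf (cs.simple i * cs.simple j) = M i j := by
  by_cases hij : i = j
  · simp [hij]
  refine Nat.dvd_antisymm (orderOf_dvd_of_pow_eq_one (cs.simple_mul_simple_pow i j)) ?_
  have hindep : LinearIndependent ℝ ![Finsupp.single i (1 : ℝ), Finsupp.single j 1] := by
    rw [LinearIndependent.pair_iff]
    intro a b h
    exact ⟨by simpa [hij] using DFunLike.congr_fun h i,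
      by simpa [Ne.symm hij] using DFunLike.congr_fun h j⟩
  have hpow := congrArg (cs.lift ⟨simpleReflection M, isLiftable_simpleReflection⟩)
    (pow_orderOf_eq_one (cs.simple i * cs.simple j))
  rw [map_pow, map_mul, cs.lift_apply_simple, cs.lift_apply_simple, map_one] at hpow
  exact dvd_of_reflection_mul_reflection_pow_eq_one _ _ (simpleCoroot_single i j)
    (by rw [simpleCoroot_single, M.symmetric]) hindep hpow

end GeometricRepresentation

section StrongExchange

open CoxeterSystem

variable {B W : Type*} [Group W] {M : CoxeterMatrix B} (cs : CoxeterSystem M W)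

theorem rightInvSeq_append (ω ω' : List B) :
    cs.rightInvSeq (ω ++ ω') =
      (cs.rightInvSeq ω).map (MulAut.conj (cs.wordProd ω')⁻¹) ++ cs.rightInvSeq ω' := by
  induction ω with
  | nil => simp
  | cons i ω ih =>
    simp [rightInvSeq, ih, cs.wordProd_append, mul_assoc]

theorem rightInvSeq_alternatingWord (i j : B) (p : ℕ) :
    cs.rightInvSeq (alternatingWord i j p) =
      ((List.range p).map fun q => cs.simple j * (cs.simple i * cs.simple j) ^ q).reverse := by
  induction p generalizing i j with
  | zero => simp [alternatingWord]
  | succ p ih =>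
    rw [alternatingWord_succ, cs.rightInvSeq_concat, ih, List.range_succ_eq_map]
    simp [Function.comp_def, pow_succ', ← mul_pow_mul, mul_assoc]

section SignedConj

variable [DecidableEq W]

/-- The permutation `(t, ε) ↦ (sᵢ t sᵢ, ε + [t = sᵢ])` of `W × ZMod 2`. On pairs with `t` a
reflection this is the action of `sᵢ` on the roots, encoded as reflections with a sign. -/
def signedConj (i : B) : Equiv.Perm (W × ZMod 2) :=
  Function.Involutive.toPerm
    (fun p => (cs.simple i * p.1 * cs.simple i, p.2 + if p.1 = cs.simple i then 1 else 0)) <| by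
    rintro ⟨t, ε⟩
    have hfix : cs.simple i * t * cs.simple i = cs.simple i ↔ t = cs.simple i := by
      rw [mul_eq_right, mul_eq_one_iff_inv_eq, cs.inv_simple, eq_comm]
    ext
    · simp [mul_assoc]
    · simp only [hfix, add_assoc, CharTwo.add_self_eq_zero, add_zero]

theorem signedConj_apply (i : B) (t : W) (ε : ZMod 2) :
    signedConj cs i (t, ε) =
      (cs.simple i * t * cs.simple i, ε + if t = cs.simple i then 1 else 0) :=
  rfl

theorem prod_map_signedConj_apply (ω : List B) (t : W) (ε : ZMod 2) :
    (ω.map (signedConj cs)).prod (t, ε) =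
      (cs.wordProd ω * t * (cs.wordProd ω)⁻¹, ε + ((cs.rightInvSeq ω).count t : ZMod 2)) := by
  induction ω with
  | nil => simp
  | cons i ω ih =>
    have hiff : cs.wordProd ω * t * (cs.wordProd ω)⁻¹ = cs.simple i ↔
        (cs.wordProd ω)⁻¹ * cs.simple i * cs.wordProd ω = t := by
      rw [mul_inv_eq_iff_eq_mul, ← eq_inv_mul_iff_mul_eq, ← mul_assoc, eq_comm]
    rw [List.map_cons, List.prod_cons, Equiv.Perm.mul_apply, ih, signedConj_apply,
      rightInvSeq, List.count_cons, cs.wordProd_cons]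
    ext
    · simp [mul_assoc]
    · simp [hiff, add_assoc]

theorem prod_map_alternatingWord_two_mul {G : Type*} [Monoid G] (f : B → G) (i j : B) (n : ℕ) :
    ((alternatingWord i j (2 * n)).map f).prod = (f i * f j) ^ n := by
  induction n with
  | zero => simp [alternatingWord]
  | succ n ih => simp [mul_add_one, alternatingWord_succ, pow_succ, ih]

theorem isLiftable_signedConj : M.IsLiftable (signedConj cs) := by
  intro i j
  rw [← prod_map_alternatingWord_two_mul]
  ext1 ⟨t, ε⟩
  have hprod : cs.wordProd (alternatingWord i j (2 * M i j)) = 1 := by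
    rw [wordProd, prod_map_alternatingWord_two_mul, cs.simple_mul_simple_pow]
  have hcount : ((cs.rightInvSeq (alternatingWord i j (2 * M i j))).count t : ZMod 2) = 0 := by
    simp [rightInvSeq_alternatingWord, two_mul, List.range_add, Function.comp_def, pow_add,
      CharTwo.add_self_eq_zero]
  rw [prod_map_signedConj_apply, hprod, hcount]
  simp

/-- The action of `W` on signed reflections extending `signedConj`. -/
noncomputable def signedConjHom : W →* Equiv.Perm (W × ZMod 2) :=
  cs.lift ⟨signedConj cs, isLiftable_signedConj cs⟩

theorem signedConjHom_wordProd_apply (ω : List B) (t : W) (ε : ZMod 2) :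
    signedConjHom cs (cs.wordProd ω) (t, ε) =
      (cs.wordProd ω * t * (cs.wordProd ω)⁻¹, ε + ((cs.rightInvSeq ω).count t : ZMod 2)) := by
  rw [← prod_map_signedConj_apply, wordProd, map_list_prod, List.map_map]
  congr 4
  ext1 i
  exact cs.lift_apply_simple _ i

theorem exists_signedConjHom_apply_eq (w t : W) :
    ∃ δ : ZMod 2, ∀ ε, signedConjHom cs w (t, ε) = (w * t * w⁻¹, ε + δ) := by
  obtain ⟨ω, rfl⟩ := cs.wordProd_surjective w
  exact ⟨_, signedConjHom_wordProd_apply cs ω t⟩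

theorem signedConjHom_apply_self {t : W} (ht : cs.IsReflection t) (ε : ZMod 2) :
    signedConjHom cs t (t, ε) = (t, ε + 1) := by
  obtain ⟨w, i, rfl⟩ := ht
  obtain ⟨δ, hδ⟩ := exists_signedConjHom_apply_eq cs w (cs.simple i)
  have hback : (w * cs.simple i * w⁻¹, ε) = signedConjHom cs w (cs.simple i, ε - δ) := by
    rw [hδ, sub_add_cancel]
  have hsimple : signedConjHom cs (cs.simple i) (cs.simple i, ε - δ) =
      (cs.simple i, ε - δ + 1) := by
    simpa using signedConjHom_wordProd_apply cs [i] (cs.simple i) (ε - δ)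
  rw [hback, map_mul, map_mul, Equiv.Perm.mul_apply, Equiv.Perm.mul_apply, map_inv,
    Equiv.Perm.inv_def, Equiv.symm_apply_apply, hsimple, hδ, sub_add_eq_add_sub, sub_add_cancel]

end SignedConj

/-- The strong exchange property: the number of occurrences of `t` in the inversion sequence of a
word for `w` is, modulo 2, the sign change of `t` under `w`, hence independent of the word. -/
theorem mem_rightInvSeq_of_isRightInversion {ω : List B} {t : W}
    (ht : cs.IsRightInversion (cs.wordProd ω) t) : t ∈ cs.rightInvSeq ω := by
  classical
  by_contra hmem
  obtain ⟨ω', hred, hω'⟩ := cs.exists_isReduced (cs.wordProd ω * t)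
  have hmem' : t ∉ cs.rightInvSeq ω' := by
    intro h
    have := (cs.isRightInversion_of_mem_rightInvSeq hred h).2
    rw [← hω', mul_assoc, ht.1.mul_self, mul_one] at this
    exact this.not_gt ht.2
  have hparity := signedConjHom_wordProd_apply cs ω' t 0
  rw [← hω', map_mul, Equiv.Perm.mul_apply, signedConjHom_apply_self cs ht.1,
    signedConjHom_wordProd_apply, List.count_eq_zero_of_not_mem hmem,
    List.count_eq_zero_of_not_mem hmem'] at hparity
  simp at hparity

end StrongExchange

section SimpleConjugation

open CoxeterSystem

variable {B W : Type*} [Group W] {M : CoxeterMatrix B} (cs : CoxeterSystem M W)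

theorem simple_injective : Function.Injective cs.simple := by
  intro i j h
  by_contra hij
  refine M.off_diagonal i j hij ?_
  rw [← orderOf_simple_mul_simple cs, h, cs.simple_mul_simple_self, orderOf_one]

theorem simple_ne_simple_mul_pow {i j : B} {p q : ℕ} (hp : M i j = 0 ∨ p < M i j) (hq : q < p) :
    cs.simple j ≠ cs.simple i * (cs.simple j * cs.simple i) ^ q := by
  intro h
  have hpow : (cs.simple j * cs.simple i) ^ (q + 1) = 1 := by
    rw [pow_succ', mul_assoc, ← h, cs.simple_mul_simple_self]
  have hdvd := orderOf_dvd_of_pow_eq_one hpow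
  rw [orderOf_simple_mul_simple, M.symmetric] at hdvd
  have := Nat.le_of_dvd q.succ_pos hdvd
  have : M i j ≠ 0 := fun h0 => by simp [h0] at hdvd
  lia

theorem exists_eq_mul_wordProd_alternatingWord {v : W} {i j : B} {p : ℕ}
    (hi : cs.IsRightDescent v i) (hj : cs.IsRightDescent v j) (hp : M i j = 0 ∨ p ≤ M i j) :
    ∃ x, v = x * cs.wordProd (alternatingWord i j p) ∧ cs.length v = cs.length x + p := by
  induction p generalizing i j with
  | zero => exact ⟨v, by simp [alternatingWord]⟩
  | succ p ih =>
    obtain ⟨x, hv, hlen⟩ := ih hj hi (by rw [M.symmetric]; lia)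
    obtain ⟨ω, hω, rfl⟩ := cs.exists_isReduced x
    have hmem : cs.simple j ∈ cs.rightInvSeq (ω ++ alternatingWord j i p) := by
      apply mem_rightInvSeq_of_isRightInversion
      rwa [cs.wordProd_append, ← hv, cs.isRightInversion_simple_iff_isRightDescent]
    rw [rightInvSeq_append, List.mem_append, rightInvSeq_alternatingWord] at hmem
    simp only [List.mem_reverse, List.mem_map, List.mem_range, MulAut.conj_apply, inv_inv] at hmem
    obtain ⟨t, ht, htj⟩ | ⟨q, hq, hqj⟩ := hmem
    · have hshorter := (cs.isRightInversion_of_mem_rightInvSeq hω ht).2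
      have hv' : v = cs.wordProd ω * t * cs.wordProd (alternatingWord i j (p + 1)) := by
        rw [alternatingWord_succ, cs.wordProd_concat, ← htj, hv]
        simp [mul_assoc, ← mul_assoc t t,
          (cs.isReflection_of_mem_rightInvSeq ω ht).mul_self]
      refine ⟨_, hv', le_antisymm ?_ (by lia)⟩
      calc cs.length v
          ≤ cs.length (cs.wordProd ω * t) +
              cs.length (cs.wordProd (alternatingWord i j (p + 1))) := by
            rw [hv']; exact cs.length_mul_le _ _
        _ ≤ cs.length (cs.wordProd ω * t) + (p + 1) := by
            simpa using cs.length_wordProd_le (alternatingWord i j (p + 1))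
    · exact absurd hqj.symm (simple_ne_simple_mul_pow cs (by lia) hq)

theorem wordProd_alternatingWord_mul_simple {i a : B} {p : ℕ} (hM : M i a = p + 1) :
    cs.wordProd (alternatingWord i a p) * cs.simple i =
      cs.simple (if Even p then a else i) * cs.wordProd (alternatingWord i a p) := by
  have hbraid := cs.wordProd_braidWord_eq i a
  rwa [braidWord, braidWord, M.symmetric a i, hM, alternatingWord_succ' i a,
    alternatingWord_succ a i, cs.wordProd_cons, cs.wordProd_concat, eq_comm] at hbraid

theorem exists_eq_mul_alternatingWord_of_mul_simple_eq {w : W} {i j : B} (hw : w ≠ 1)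
    (hi : ¬cs.IsRightDescent w i) (hconj : w * cs.simple i = cs.simple j * w) :
    ∃ a p x, i ≠ a ∧ 0 < p ∧ M i a = p + 1 ∧ w = x * cs.wordProd (alternatingWord i a p) ∧
      cs.length w = cs.length x + p ∧
      x * cs.simple (if Even p then a else i) = cs.simple j * x := by
  obtain ⟨a, ha⟩ := cs.exists_rightDescent_of_ne_one hw
  have hia : i ≠ a := by rintro rfl; exact hi ha
  rw [cs.not_isRightDescent_iff] at hi
  rw [cs.isRightDescent_iff] at ha
  have descent_i : cs.IsRightDescent (w * cs.simple i) i := by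
    rw [IsRightDescent, cs.simple_mul_simple_cancel_right]
    lia
  have descent_a : cs.IsRightDescent (w * cs.simple i) a := by
    calc cs.length (w * cs.simple i * cs.simple a)
        = cs.length (cs.simple j * (w * cs.simple a)) := by rw [hconj, mul_assoc]
      _ ≤ 1 + cs.length (w * cs.simple a) := by
          simpa using cs.length_mul_le (cs.simple j) (w * cs.simple a)
      _ < cs.length (w * cs.simple i) := by lia
  have finite_order : M i a ≠ 0 := by
    intro h0
    obtain ⟨x, -, hlen⟩ := exists_eq_mul_wordProd_alternatingWord cs descent_a descent_i
      (p := cs.length w + 2) (by rw [M.symmetric]; exact .inl h0)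
    lia
  obtain ⟨p, hp⟩ := Nat.exists_eq_succ_of_ne_zero finite_order
  obtain ⟨x, hx, hlen⟩ := exists_eq_mul_wordProd_alternatingWord cs descent_a descent_i
    (p := p + 1) (by rw [M.symmetric]; lia)
  rw [alternatingWord_succ, cs.wordProd_concat, ← mul_assoc, mul_left_inj] at hx
  refine ⟨a, p, x, hia, ?_, hp, hx, by lia, ?_⟩
  · have := M.off_diagonal i a hia
    lia
  · rw [← mul_left_inj (cs.wordProd (alternatingWord i a p)), mul_assoc,
      ← wordProd_alternatingWord_mul_simple cs hp, ← mul_assoc, ← hx, hconj, hx, mul_assoc]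

/-- Induction over the elements conjugating a variable simple reflection `sᵢ` to the fixed `sⱼ`. -/
theorem mul_simple_eq_simple_mul_induction {j : B} {P : B → W → Prop} (one : P j 1)
    (mul_simple : ∀ i x, P i x → P i (x * cs.simple i))
    (mul_even : ∀ i a q x, i ≠ a → M i a = 2 * q → P i x →
      P i (x * (cs.simple i * cs.simple a) ^ q))
    (mul_odd : ∀ i a q x, i ≠ a → M i a = 2 * q + 1 → P a x →
      P i (x * (cs.simple i * cs.simple a) ^ q))
    {i : B} {w : W} (hconj : w * cs.simple i = cs.simple j * w) : P i w := by
  induction hn : cs.length w using Nat.strong_induction_on generalizing i w with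
  | _ n ih =>
  subst hn
  by_cases hi : cs.IsRightDescent w i
  · rw [← cs.simple_mul_simple_cancel_right (w := w) i]
    refine mul_simple i _ (ih _ hi ?_ rfl)
    rw [hconj, mul_assoc, hconj]
  by_cases hw : w = 1
  · subst hw
    rw [one_mul, mul_one] at hconj
    rwa [simple_injective cs hconj]
  obtain ⟨a, p, x, hia, hp, hM, rfl, hlen, hx⟩ :=
    exists_eq_mul_alternatingWord_of_mul_simple_eq cs hw hi hconj
  have hPx := ih (cs.length x) (by lia) hx rfl
  obtain ⟨q, rfl | rfl⟩ := p.even_or_odd'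
  · simpa [cs.prod_alternatingWord_eq_mul_pow] using mul_odd i a q x hia hM (by simpa using hPx)
  · have hPx' : P i x := by simpa using hPx
    have heq : cs.wordProd (alternatingWord i a (2 * q + 1)) =
        cs.simple i * (cs.simple i * cs.simple a) ^ (q + 1) := by
      rw [cs.prod_alternatingWord_eq_mul_pow, show (2 * q + 1) / 2 = q by lia, pow_succ',
        if_neg (by simp)]
      simp [← mul_assoc]
    rw [heq, ← mul_assoc]
    exact mul_even i a (q + 1) _ hia (by lia) (mul_simple i x hPx')

end SimpleConjugation

section SimpleCentralizer

open CoxeterSystem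

variable {B W : Type*} [Group W] {M : CoxeterMatrix B} (cs : CoxeterSystem M W) {i j : B}

theorem inv_simple_mul_simple_pow (i j : B) (n : ℕ) :
    ((cs.simple i * cs.simple j) ^ n)⁻¹ = (cs.simple j * cs.simple i) ^ n := by
  rw [← inv_pow, mul_inv_rev, cs.inv_simple, cs.inv_simple]

theorem simple_mul_simple_pow_half_comm (h : Even (M i j)) :
    (cs.simple i * cs.simple j) ^ (M i j / 2) = (cs.simple j * cs.simple i) ^ (M i j / 2) := by
  rw [← inv_simple_mul_simple_pow cs i j, eq_inv_iff_mul_eq_one, ← pow_add, ← two_mul,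
    Nat.two_mul_div_two_of_even h, cs.simple_mul_simple_pow]

theorem commute_simple_mul_simple_pow_half (h : Even (M i j)) :
    Commute ((cs.simple i * cs.simple j) ^ (M i j / 2)) (cs.simple i) := by
  rw [commute_iff_eq, mul_pow_mul, simple_mul_simple_pow_half_comm cs h]

theorem semiconjBy_simple_mul_simple_pow_half (h : Odd (M i j)) :
    SemiconjBy ((cs.simple j * cs.simple i) ^ (M i j / 2)) (cs.simple j) (cs.simple i) := by
  have hM : M j i = 2 * (M i j / 2) + 1 := by
    rw [M.symmetric, Nat.two_mul_div_two_add_one_of_odd h]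
  simpa [SemiconjBy, cs.prod_alternatingWord_eq_mul_pow] using
    wordProd_alternatingWord_mul_simple cs hM

theorem isConj_simple_of_odd (h : Odd (M i j)) : IsConj (cs.simple i) (cs.simple j) :=
  (isConj_iff.mpr ⟨_, mul_inv_eq_of_eq_mul (semiconjBy_simple_mul_simple_pow_half cs h)⟩).symm

theorem centralizer_simple_le_of_odd_of_even (hodd : Odd (M i j))
    (heven_i : ∀ a ≠ i, a ≠ j → Even (M i a)) (heven_j : ∀ a ≠ i, a ≠ j → Even (M j a))
    {H : Subgroup W} (simple_mem : cs.simple i ∈ H)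
    (pow_mem : ∀ a ≠ i, a ≠ j → (cs.simple i * cs.simple a) ^ (M i a / 2) ∈ H)
    (conj_pow_mem : ∀ a ≠ i, a ≠ j → (cs.simple j * cs.simple i) ^ (M i j / 2) *
      (cs.simple j * cs.simple a) ^ (M j a / 2) *
      (cs.simple i * cs.simple j) ^ (M i j / 2) ∈ H) :
    Subgroup.centralizer {cs.simple i} ≤ H := by
  have hconj := semiconjBy_simple_mul_simple_pow_half cs hodd
  have hd_inv := inv_simple_mul_simple_pow cs j i (M i j / 2)
  rw [← hd_inv] at conj_pow_mem
  set d := (cs.simple j * cs.simple i) ^ (M i j / 2) with hd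
  have half (q : ℕ) : (2 * q + 1) / 2 = q := by lia
  intro w hw
  refine (mul_simple_eq_simple_mul_induction cs (i := i) (j := i)
    (P := fun a x => (a = i → x ∈ H) ∧ (a = j → x * d⁻¹ ∈ H))
    ⟨fun _ => H.one_mem, ?one⟩ ?mul_simple ?mul_even ?mul_odd
    (Subgroup.mem_centralizer_singleton_iff.mp hw)).1 rfl
  case one =>
    rintro rfl
    simp [hd]
  case mul_simple =>
    refine fun a x hx => ⟨?_, ?_⟩ <;> rintro rfl
    · exact H.mul_mem (hx.1 rfl) simple_mem
    · rw [mul_assoc, ← hconj.inv_symm_left.eq, ← mul_assoc]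
      exact H.mul_mem (hx.2 rfl) simple_mem
  case mul_even =>
    refine fun a b q x hab hM hx => ⟨?_, ?_⟩ <;> rintro rfl
    · have hbj : b ≠ j := by rintro rfl; grind
      exact H.mul_mem (hx.1 rfl) (by simpa [hM] using pow_mem b hab.symm hbj)
    · have hbi : b ≠ i := by rintro rfl; grind [M.symmetric]
      have := H.mul_mem (hx.2 rfl) (conj_pow_mem b hbi hab.symm)
      simpa [hM, mul_assoc] using this
  case mul_odd =>
    refine fun a b q x hab hM hx => ⟨?_, ?_⟩ <;> rintro rfl
    · obtain rfl : b = j := by by_contra hbj; grind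
      simpa [hd_inv, hM, half] using hx.2 rfl
    · obtain rfl : b = i := by by_contra hbi; grind
      simpa [hd, M.symmetric b a, hM, half] using hx.1 rfl

theorem centralizer_simple_of_odd_of_even (hodd : Odd (M i j))
    (heven_i : ∀ a ≠ i, a ≠ j → Even (M i a)) (heven_j : ∀ a ≠ i, a ≠ j → Even (M j a)) :
    Subgroup.centralizer {cs.simple i} = Subgroup.closure
      (insert (cs.simple i) ((fun a => (cs.simple i * cs.simple a) ^ (M i a / 2)) '' {i, j}ᶜ ∪
        (fun a => (cs.simple j * cs.simple i) ^ (M i j / 2) *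
          (cs.simple j * cs.simple a) ^ (M j a / 2) *
          (cs.simple i * cs.simple j) ^ (M i j / 2)) '' {i, j}ᶜ)) := by
  apply le_antisymm
  · apply centralizer_simple_le_of_odd_of_even cs hodd heven_i heven_j
    · exact Subgroup.subset_closure (.inl rfl)
    · exact fun a hi hj => Subgroup.subset_closure (.inr (.inl ⟨a, by simp [hi, hj], rfl⟩))
    · exact fun a hi hj => Subgroup.subset_closure (.inr (.inr ⟨a, by simp [hi, hj], rfl⟩))
  rw [Subgroup.closure_le]
  rintro _ (rfl | ⟨a, ha, rfl⟩ | ⟨a, ha, rfl⟩)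
  all_goals rw [SetLike.mem_coe, Subgroup.mem_centralizer_singleton_iff]
  · rw [Set.mem_compl_iff, Set.mem_insert_iff, Set.mem_singleton_iff, not_or] at ha
    exact commute_simple_mul_simple_pow_half cs (heven_i a ha.1 ha.2)
  · rw [Set.mem_compl_iff, Set.mem_insert_iff, Set.mem_singleton_iff, not_or] at ha
    have hconj := semiconjBy_simple_mul_simple_pow_half cs hodd
    rw [← inv_simple_mul_simple_pow cs j i]
    exact (hconj.mul_left
      (commute_simple_mul_simple_pow_half cs (heven_j a ha.1 ha.2))).mul_left hconj.inv_symm_left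

theorem centralizer_simple_of_even (heven : ∀ a ≠ i, Even (M i a)) :
    Subgroup.centralizer {cs.simple i} = Subgroup.closure
      (insert (cs.simple i) ((fun a => (cs.simple i * cs.simple a) ^ (M i a / 2)) '' {i}ᶜ)) := by
  have heven' : ∀ a ≠ i, a ≠ i → Even (M i a) := fun a ha _ => heven a ha
  simpa using centralizer_simple_of_odd_of_even cs (by simp) heven' heven'

end SimpleCentralizer

section TriangleGroup

/-- The Coxeter matrix of the triangle group `Δ(k', l', m')`. A period `0` stands for an infinite
link period. -/
def triCoxeterMatrix (k' l' m' : ℕ) (hk : k' ≠ 1) (hl : l' ≠ 1) (hm : m' ≠ 1) :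
    CoxeterMatrix (Fin 3) where
  M := !![1, k', m'; k', 1, l'; m', l', 1]
  isSymm := by ext i j; fin_cases i <;> fin_cases j <;> rfl
  diagonal i := by fin_cases i <;> rfl
  off_diagonal i j hij := by
    fin_cases i <;> fin_cases j <;> first | assumption | exact absurd rfl hij

variable {k' l' m' : ℕ} (hk : k' ≠ 1) (hl : l' ≠ 1) (hm : m' ≠ 1)

theorem lift_simple_eq_one_of_mem_triRels {W : Type*} [Group W]
    (cs : CoxeterSystem (triCoxeterMatrix k' l' m' hk hl hm) W) :
    ∀ r ∈ triRels k' l' m', FreeGroup.lift cs.simple r = 1 := by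
  rintro r (rfl | rfl | rfl | rfl | rfl | rfl) <;>
    simp only [map_pow, map_mul, FreeGroup.lift_apply_of, cs.simple_sq]
  exacts [cs.simple_mul_simple_pow 0 1, cs.simple_mul_simple_pow 1 2, cs.simple_mul_simple_pow 2 0]

theorem lift_cgen_eq_one_of_mem_relationsSet :
    ∀ r ∈ (triCoxeterMatrix k' l' m' hk hl hm).relationsSet,
      FreeGroup.lift (cgen k' l' m') r = 1 := by
  have rel_eq_one {r : FreeGroup (Fin 3)} (hr : r ∈ triRels k' l' m') :
      PresentedGroup.mk (triRels k' l' m') r = 1 :=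
    PresentedGroup.one_of_mem hr
  have sq_eq_one (i : Fin 3) : (cgen k' l' m' i * cgen k' l' m' i) ^ 1 = 1 := by
    rw [pow_one, ← sq]
    exact rel_eq_one (r := FreeGroup.of i ^ 2) (by fin_cases i <;> simp [triRels])
  have h01 : (cgen k' l' m' 0 * cgen k' l' m' 1) ^ k' = 1 := rel_eq_one (by simp [triRels])
  have h12 : (cgen k' l' m' 1 * cgen k' l' m' 2) ^ l' = 1 := rel_eq_one (by simp [triRels])
  have h20 : (cgen k' l' m' 2 * cgen k' l' m' 0) ^ m' = 1 := rel_eq_one (by simp [triRels])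
  have rel_symm {i j : Fin 3} {n : ℕ} (h : (cgen k' l' m' i * cgen k' l' m' j) ^ n = 1) :
      (cgen k' l' m' j * cgen k' l' m' i) ^ n = 1 := by
    have inv_cgen (i : Fin 3) : (cgen k' l' m' i)⁻¹ = cgen k' l' m' i :=
      inv_eq_of_mul_eq_one_left (by simpa using sq_eq_one i)
    rw [← inv_eq_one, ← inv_pow, mul_inv_rev, inv_cgen, inv_cgen, h]
  rintro _ ⟨⟨i, j⟩, rfl⟩
  rw [Function.uncurry_apply_pair, CoxeterMatrix.relation, map_pow, map_mul,
    FreeGroup.lift_apply_of, FreeGroup.lift_apply_of]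
  fin_cases i <;> fin_cases j
  exacts [sq_eq_one 0, h01, rel_symm h20, rel_symm h01, sq_eq_one 1, h12, h20, rel_symm h12,
    sq_eq_one 2]

/-- `Δ(k', l', m')` as a Coxeter group, with `c₀, c₁, c₂` as its simple reflections. -/
def triCoxeterSystem : CoxeterSystem (triCoxeterMatrix k' l' m' hk hl hm) (Tri k' l' m') :=
  let M := triCoxeterMatrix k' l' m' hk hl hm
  ⟨MonoidHom.toMulEquiv
    (PresentedGroup.toGroup (lift_simple_eq_one_of_mem_triRels hk hl hm M.toCoxeterSystem))
    (PresentedGroup.toGroup (lift_cgen_eq_one_of_mem_relationsSet hk hl hm))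
    (PresentedGroup.ext fun _ => rfl)
    (PresentedGroup.ext fun _ => rfl)⟩

theorem triCoxeterSystem_simple (j : Fin 3) :
    (triCoxeterSystem hk hl hm).simple j = cgen k' l' m' j :=
  rfl

section EvenEvenOdd

variable {k l m : ℕ} {hk : 2 * k ≠ 1} {hl : 2 * l ≠ 1} {hm : 2 * m + 1 ≠ 1} {W : Type*} [Group W]
  (cs : CoxeterSystem (triCoxeterMatrix (2 * k) (2 * l) (2 * m + 1) hk hl hm) W)

theorem isConj_simple_zero_simple_two : IsConj (cs.simple 0) (cs.simple 2) :=
  isConj_simple_of_odd cs ⟨m, rfl⟩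

theorem centralizer_simple_zero :
    Subgroup.centralizer {cs.simple 0} =
      Subgroup.closure {cs.simple 0, (cs.simple 0 * cs.simple 1) ^ k,
        (cs.simple 2 * cs.simple 0) ^ m * (cs.simple 2 * cs.simple 1) ^ l *
          (cs.simple 0 * cs.simple 2) ^ m} := by
  have hcompl : ({0, 2}ᶜ : Set (Fin 3)) = {1} := by ext a; fin_cases a <;> simp
  have half : (2 * m + 1) / 2 = m := by lia
  rw [centralizer_simple_of_odd_of_even cs (j := 2) ⟨m, rfl⟩
    (by simp [Fin.forall_fin_succ, triCoxeterMatrix])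
    (by simp [Fin.forall_fin_succ, triCoxeterMatrix]),
    hcompl, Set.image_singleton, Set.image_singleton, Set.singleton_union]
  simp [triCoxeterMatrix, half]

theorem centralizer_simple_one :
    Subgroup.centralizer {cs.simple 1} =
      Subgroup.closure {cs.simple 1, (cs.simple 0 * cs.simple 1) ^ k,
        (cs.simple 1 * cs.simple 2) ^ l} := by
  have hcompl : ({1}ᶜ : Set (Fin 3)) = {0, 2} := by ext a; fin_cases a <;> simp
  rw [centralizer_simple_of_even cs (by simp [Fin.forall_fin_succ, triCoxeterMatrix]), hcompl,
    Set.image_pair, simple_mul_simple_pow_half_comm cs (i := 1) (j := 0) ⟨k, two_mul k⟩]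
  simp [triCoxeterMatrix]

end EvenEvenOdd

end TriangleGroup

/-- Here `k = 0` or `l = 0` means that the corresponding link period is infinite. -/
theorem centralizer_even_even_odd_general (k l m : ℕ) (hm : 1 ≤ m) :
    ∀ c₀ c₁ c₂ : Tri (2 * k) (2 * l) (2 * m + 1),
      c₀ = cgen _ _ _ 0 → c₁ = cgen _ _ _ 1 → c₂ = cgen _ _ _ 2 →
      IsConj c₀ c₂ ∧
      Subgroup.centralizer {c₀} =
        Subgroup.closure {c₀, (c₀ * c₁) ^ k,
          (c₂ * c₀) ^ m * (c₂ * c₁) ^ l * (c₀ * c₂) ^ m} ∧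
      Subgroup.centralizer {c₁} =
        Subgroup.closure {c₁, (c₀ * c₁) ^ k, (c₁ * c₂) ^ l} := by
  rintro _ _ _ rfl rfl rfl
  have hk : 2 * k ≠ 1 := by lia
  have hl : 2 * l ≠ 1 := by lia
  have hm' : 2 * m + 1 ≠ 1 := by lia
  let cs := triCoxeterSystem hk hl hm'
  simpa only [cs, triCoxeterSystem_simple] using
    (⟨isConj_simple_zero_simple_two cs, centralizer_simple_zero cs, centralizer_simple_one cs⟩ :
      _ ∧ _ ∧ _)

/-- in `Δ(2k, 2l, 2m+1)` (first two link periods even, third odd),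
`c₀` is conjugate to `c₂`, the centralizer of `c₀` is generated by `c₀`, `(c₀c₁)^k`, and
`(c₂c₀)^m (c₂c₁)^l (c₀c₂)^m`, and the centralizer of `c₁` is generated by `c₁`,
`(c₀c₁)^k`, and `(c₁c₂)^l`. -/
theorem centralizer_even_even_odd (k l m : ℕ) (hk : 1 ≤ k) (hl : 1 ≤ l) (hm : 1 ≤ m)
    (harea : (1 : ℚ) / (2 * k) + 1 / (2 * l) + 1 / (2 * m + 1) < 1) :
    ∀ c₀ c₁ c₂ : Tri (2 * k) (2 * l) (2 * m + 1),
      c₀ = cgen _ _ _ 0 → c₁ = cgen _ _ _ 1 → c₂ = cgen _ _ _ 2 →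
      IsConj c₀ c₂ ∧
      Subgroup.centralizer {c₀} =
        Subgroup.closure {c₀, (c₀ * c₁) ^ k,
          (c₂ * c₀) ^ m * (c₂ * c₁) ^ l * (c₀ * c₂) ^ m} ∧
      Subgroup.centralizer {c₁} =
        Subgroup.closure {c₁, (c₀ * c₁) ^ k, (c₁ * c₂) ^ l} :=
  centralizer_even_even_odd_general k l m hm
end

section
/- Let k, l, m ≥ 1 be integers with 1/(2k) + 1/(2l) + 1/(2m) < 1, and let Δ = Δ(2k, 2l, 2m) with canonical generators c₀, c₁, c₂ (so all three link periods are even). Then the centralizer of c₀ in Δ equals the subgroup generated by c₀, (c₀c₁)^k, and (c₀c₂)^m; the centralizer of c₁ in Δ equals the subgroup generated by c₁, (c₀c₁)^k, and (c₁c₂)^l; and the centralizer of c₂ in Δ equals the subgroup generated by c₂, (c₀c₂)^m, and (c₁c₂)^l. -/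
/-!
The group is the Coxeter group of a triangle diagram with even labels. In any even Coxeter system,
let `w` commute with a simple reflection `s i` and let `j` be a right descent of `w`. Write
`w = u * d` with `d` in the standard parabolic subgroup `⟨s i, s j⟩` and `u` shortest in its coset.
Then `t := d * s i * d⁻¹` lies in this parabolic subgroup and `u * t = s i * u`, so
`ℓ u + ℓ t = ℓ (u * t) ≤ ℓ u + 1`. Hence `t` is a simple reflection, and it is conjugate to `s i`;
since all labels are even, distinct simple reflections are not conjugate, so `t = s i`.
Therefore `d` and the shorter element `u` both commute with `s i`; induction on length reduces the
claim to the dihedral group `⟨s i, s j⟩`, where it is elementary.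
-/

namespace EvenCoxeter

open CoxeterSystem

section InvolutionPairs

variable {G : Type*} [Group G] {a b : G}

theorem mul_swap_eq_inv (ha : a * a = 1) (hb : b * b = 1) : b * a = (a * b)⁻¹ := by
  rw [mul_inv_rev, inv_eq_of_mul_eq_one_left ha, inv_eq_of_mul_eq_one_left hb]

theorem mul_swap_pow_eq_one (ha : a * a = 1) (hb : b * b = 1) {n : ℕ} (h : (a * b) ^ n = 1) :
    (b * a) ^ n = 1 := by
  rw [mul_swap_eq_inv ha hb, inv_pow, h, inv_one]

theorem exists_zpow_of_mem_closure_pair (ha : a * a = 1) (hb : b * b = 1) {x : G}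
    (hx : x ∈ Subgroup.closure {a, b}) :
    ∃ n : ℤ, x = (a * b) ^ n ∨ x = (a * b) ^ n * a := by
  have mul_gen : ∀ x : G, (∃ n : ℤ, x = (a * b) ^ n ∨ x = (a * b) ^ n * a) →
      ∀ y ∈ ({a, b} : Set G), ∃ n : ℤ, x * y = (a * b) ^ n ∨ x * y = (a * b) ^ n * a := by
    rintro _ ⟨n, rfl | rfl⟩ _ (rfl | rfl)
    · exact ⟨n, .inr rfl⟩
    · refine ⟨n - 1, .inr ?_⟩
      rw [zpow_sub_one, ← mul_swap_eq_inv ha hb, mul_assoc, mul_assoc, ha, mul_one]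
    · exact ⟨n, .inl (by rw [mul_assoc, ha, mul_one])⟩
    · exact ⟨n + 1, .inl (by rw [zpow_add_one, mul_assoc])⟩
  have inv_gen : ∀ y ∈ ({a, b} : Set G), y⁻¹ = y := by
    rintro _ (rfl | rfl)
    · exact inv_eq_of_mul_eq_one_left ha
    · exact inv_eq_of_mul_eq_one_left hb
  induction hx using Subgroup.closure_induction_right with
  | one => exact ⟨0, .inl (zpow_zero _).symm⟩
  | mul_right x _ y hy ih => exact mul_gen x ih y hy
  | mul_inv_cancel x _ y hy ih => exact (inv_gen y hy).symm ▸ mul_gen x ih y hy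

theorem commute_zpow_mul_iff (ha : a * a = 1) (hb : b * b = 1) (n : ℤ) :
    Commute a ((a * b) ^ n) ↔ (a * b) ^ (2 * n) = 1 := by
  have hinv : SemiconjBy a (a * b) (a * b)⁻¹ := by
    rw [SemiconjBy, ← mul_swap_eq_inv ha hb, ← mul_assoc, ha, one_mul, mul_assoc, ha, mul_one]
  have hpow := hinv.zpow_right n
  rw [SemiconjBy, inv_zpow] at hpow
  rw [commute_iff_eq, hpow, mul_left_inj, inv_eq_iff_mul_eq_one, two_mul, zpow_add]

end InvolutionPairs

variable {B W : Type*} [Group W] {M : CoxeterMatrix B} (cs : CoxeterSystem M W)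

local notation "s" => cs.simple
local notation "π" => cs.wordProd
local notation "ℓ" => cs.length
local notation "ris" => cs.rightInvSeq

section Exchange

theorem leftInvSeq_alternatingWord (i j : B) (n : ℕ) :
    cs.leftInvSeq (alternatingWord i j (2 * n)) =
      (List.range (2 * n)).map fun k ↦ s i * (s j * s i) ^ k := by
  refine List.ext_getElem (by simp) fun k hk _ ↦ ?_
  rw [cs.getElem_leftInvSeq_alternatingWord i j n k (by simpa using hk),
    cs.prod_alternatingWord_eq_mul_pow, if_neg (by simp), show (2 * k + 1) / 2 = k by lia]
  simp

variable [DecidableEq W]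

theorem even_count_leftInvSeq_alternatingWord (i j : B) (t : W) :
    Even ((cs.leftInvSeq (alternatingWord i j (2 * M j i))).count t) := by
  rw [leftInvSeq_alternatingWord, two_mul, List.range_add, List.map_append, List.count_append,
    List.map_map]
  simp only [Function.comp_def, pow_add, cs.simple_mul_simple_pow, one_mul]
  exact ⟨_, rfl⟩

/-- The action of the simple reflection `s i` on `W × ZMod 2` by conjugation on `W`, where the sign
changes exactly at the fixed point `s i`. It descends to `W`, which makes the parity of the number
of times that `t` occurs in the right inversion sequence of a word depend on its product only. -/
def signedConj (i : B) : Function.End (W × ZMod 2) :=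
  fun x ↦ (s i * x.1 * s i, (if x.1 = s i then 1 else 0) + x.2)

theorem prod_map_signedConj (ω : List B) (t : W) (ε : ZMod 2) :
    (ω.map (signedConj cs)).prod (t, ε) = (π ω * t * (π ω)⁻¹, (ris ω).count t + ε) := by
  induction ω with
  | nil => simp [Function.End.one_def]
  | cons i ω ih =>
    have hfix : (π ω)⁻¹ * s i * π ω = t ↔ π ω * t * (π ω)⁻¹ = s i := by
      rw [mul_assoc, inv_mul_eq_iff_eq_mul, mul_inv_eq_iff_eq_mul, eq_comm]
    rw [List.map_cons, List.prod_cons]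
    change signedConj cs i ((ω.map (signedConj cs)).prod (t, ε)) = _
    rw [ih]
    refine Prod.ext ?_ ?_
    · simp only [signedConj, cs.wordProd_cons, mul_inv_rev, cs.inv_simple, mul_assoc]
    · simp only [signedConj, rightInvSeq, List.count_cons, beq_iff_eq, hfix, Nat.cast_add,
        Nat.cast_ite, Nat.cast_one, Nat.cast_zero]
      rw [add_left_comm, add_assoc]

theorem signedConj_mul_pow (i j : B) (n : ℕ) :
    (signedConj cs i * signedConj cs j) ^ n =
      ((alternatingWord j i (2 * n)).reverse.map (signedConj cs)).prod := by
  induction n with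
  | zero => rfl
  | succ n ih =>
    rw [pow_succ', ih, mul_add_one, alternatingWord_succ, alternatingWord_succ]
    simp [mul_assoc]

theorem isLiftable_signedConj : M.IsLiftable (signedConj cs) := by
  intro i j
  have hcount := even_count_leftInvSeq_alternatingWord cs j i
  have hprod : π (alternatingWord j i (2 * M i j)) = 1 := by
    simp [cs.prod_alternatingWord_eq_mul_pow]
  funext ⟨t, ε⟩
  rw [signedConj_mul_pow, prod_map_signedConj, cs.rightInvSeq_reverse, List.count_reverse,
    (ZMod.natCast_eq_zero_iff_even).2 (hcount t), cs.wordProd_reverse, hprod]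
  simp [Function.End.one_def]

theorem count_rightInvSeq_eq_of_wordProd_eq {ω ω' : List B} (h : π ω = π ω') (t : W) :
    ((ris ω).count t : ZMod 2) = (ris ω').count t := by
  have hlift : ∀ ω : List B, cs.lift ⟨_, isLiftable_signedConj cs⟩ (π ω) =
      (ω.map (signedConj cs)).prod := by
    intro ω
    simp [wordProd, map_list_prod, Function.comp_def,
      cs.lift_apply_simple (isLiftable_signedConj cs)]
  have := congrArg (fun w ↦ (cs.lift ⟨_, isLiftable_signedConj cs⟩ w (t, 0)).2) h
  simpa only [hlift, prod_map_signedConj, add_zero] using this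

end Exchange

theorem mem_rightInvSeq_of_wordProd_eq {ω ω' : List B} (hω : cs.IsReduced ω) (h : π ω = π ω')
    {t : W} (ht : t ∈ ris ω) : t ∈ ris ω' := by
  classical
  have hcount := count_rightInvSeq_eq_of_wordProd_eq cs h t
  rw [List.count_eq_one_of_mem hω.nodup_rightInvSeq ht] at hcount
  by_contra ht'
  simp [List.count_eq_zero_of_not_mem ht'] at hcount

theorem exists_wordProd_eraseIdx_eq {ω : List B} {i : B} (h : cs.IsRightDescent (π ω) i) :
    ∃ k < ω.length, π (ω.eraseIdx k) = π ω * s i := by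
  obtain ⟨τ, hτ, hτω⟩ := cs.exists_isReduced (π ω * s i)
  have hprod : π (τ.concat i) = π ω := by
    rw [cs.wordProd_concat, ← hτω, cs.simple_mul_simple_cancel_right]
  have hred : cs.IsReduced (τ.concat i) := by
    rw [CoxeterSystem.IsReduced, hprod, ← cs.isRightDescent_iff.1 h, hτω, hτ.eq, List.length_concat]
  have hmem : s i ∈ ris ω :=
    mem_rightInvSeq_of_wordProd_eq cs hred hprod <| by
      rw [cs.rightInvSeq_concat, List.concat_eq_append]
      exact List.mem_concat_self
  obtain ⟨k, hk, hki⟩ := List.getElem_of_mem hmem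
  refine ⟨k, by simpa using hk, ?_⟩
  rw [← cs.wordProd_mul_getD_rightInvSeq, List.getD_eq_getElem _ _ hk, hki]

theorem exists_isReduced_sublist (ω : List B) :
    ∃ ω' : List B, ω'.Sublist ω ∧ cs.IsReduced ω' ∧ π ω' = π ω := by
  induction ω using List.reverseRecOn with
  | nil => exact ⟨[], .refl _, by simp [CoxeterSystem.IsReduced], rfl⟩
  | append_singleton ω i ih =>
    obtain ⟨ω', hsub, hred, hprod⟩ := ih
    have hωi : π (ω ++ [i]) = π ω' * s i := by simp [cs.wordProd_append, hprod]
    by_cases hdesc : cs.IsRightDescent (π ω') i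
    · obtain ⟨k, hk, hkprod⟩ := exists_wordProd_eraseIdx_eq cs hdesc
      have hlen := cs.isRightDescent_iff.1 hdesc
      refine ⟨ω'.eraseIdx k, ((ω'.eraseIdx_sublist k).trans hsub).trans
        (List.sublist_append_left ω [i]), ?_, hkprod.trans hωi.symm⟩
      rw [CoxeterSystem.IsReduced, hkprod, List.length_eraseIdx_of_lt hk]
      have := hred.eq
      lia
    · have hlen := cs.not_isRightDescent_iff.1 hdesc
      refine ⟨ω' ++ [i], hsub.append_right [i], ?_, by simp [cs.wordProd_append, hprod]⟩
      rw [CoxeterSystem.IsReduced, cs.wordProd_append, cs.wordProd_singleton, hlen, hred.eq,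
        List.length_append, List.length_singleton]

section Parabolic

/-- The standard parabolic subgroup of `W` generated by the simple reflections indexed by `J`. -/
def parabolic (J : Set B) : Subgroup W := Subgroup.closure (cs.simple '' J)

/-- `w` has minimal length in its left coset of the standard parabolic subgroup of `J`. -/
def IsMinCosetRep (J : Set B) (w : W) : Prop := ∀ d ∈ parabolic cs J, ℓ w ≤ ℓ (w * d)

variable {cs} {J : Set B}

theorem simple_mem_parabolic {i : B} (hi : i ∈ J) : s i ∈ parabolic cs J :=
  Subgroup.subset_closure (Set.mem_image_of_mem _ hi)

theorem mem_parabolic_iff {d : W} :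
    d ∈ parabolic cs J ↔ ∃ ω : List B, (∀ i ∈ ω, i ∈ J) ∧ π ω = d := by
  constructor
  · intro hd
    have concat : ∀ d : W, (∃ ω : List B, (∀ i ∈ ω, i ∈ J) ∧ π ω = d) → ∀ i ∈ J,
        ∃ ω : List B, (∀ i ∈ ω, i ∈ J) ∧ π ω = d * s i := by
      rintro _ ⟨ω, hω, rfl⟩ i hi
      refine ⟨ω.concat i, ?_, cs.wordProd_concat i ω⟩
      simpa [or_imp, forall_and] using ⟨hω, hi⟩
    induction hd using Subgroup.closure_induction_right with
    | one => exact ⟨[], by simp, cs.wordProd_nil⟩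
    | mul_right d _ y hy ih =>
      obtain ⟨i, hi, rfl⟩ := hy
      exact concat d ih i hi
    | mul_inv_cancel d _ y hy ih =>
      obtain ⟨i, hi, rfl⟩ := hy
      rw [cs.inv_simple]
      exact concat d ih i hi
  · rintro ⟨ω, hω, rfl⟩
    refine Subgroup.list_prod_mem _ fun x hx ↦ ?_
    obtain ⟨i, hi, rfl⟩ := List.mem_map.1 hx
    exact simple_mem_parabolic (hω i hi)

variable (cs J) in
theorem exists_isMinCosetRep_mul (w : W) : ∃ d ∈ parabolic cs J, IsMinCosetRep cs J (w * d) := by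
  obtain ⟨d, hd, hmin⟩ := (measure fun d ↦ ℓ (w * d)).wf.has_min (parabolic cs J : Set W)
    ⟨1, one_mem _⟩
  refine ⟨d, hd, fun e he ↦ ?_⟩
  rw [mul_assoc]
  exact not_lt.1 (hmin (d * e) (mul_mem hd he))

theorem IsMinCosetRep.length_mul {w d : W} (hw : IsMinCosetRep cs J w) (hd : d ∈ parabolic cs J) :
    ℓ (w * d) = ℓ w + ℓ d := by
  refine (cs.length_mul_le w d).antisymm ?_
  obtain ⟨ω, hω, rfl⟩ := cs.exists_isReduced w
  obtain ⟨τ, hτ, rfl⟩ := mem_parabolic_iff.1 hd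
  obtain ⟨_, hsub, hred, hprod⟩ := exists_isReduced_sublist cs (ω ++ τ)
  obtain ⟨ω', τ', rfl, hω', hτ'⟩ := List.sublist_append_iff.1 hsub
  rw [cs.wordProd_append, cs.wordProd_append] at hprod
  have hτ'mem : π τ' ∈ parabolic cs J :=
    mem_parabolic_iff.2 ⟨τ', fun i hi ↦ hτ i (hτ'.subset hi), rfl⟩
  have hle : ω.length ≤ ω'.length := by
    have hcoset : π ω' = π ω * (π τ * (π τ')⁻¹) := by
      rw [← mul_assoc, ← hprod, mul_inv_cancel_right]
    calc ω.length = ℓ (π ω) := hω.symm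
      _ ≤ ℓ (π ω') := hcoset ▸ hw _ (mul_mem hd (inv_mem hτ'mem))
      _ ≤ ω'.length := cs.length_wordProd_le ω'
  obtain rfl : ω' = ω := hω'.eq_of_length_le hle
  obtain hττ' : π τ' = π τ := mul_left_cancel hprod
  calc ℓ (π ω') + ℓ (π τ) ≤ ω'.length + τ'.length :=
        add_le_add hω.le (hττ' ▸ cs.length_wordProd_le τ')
    _ = ℓ (π ω' * π τ) := by rw [← hprod, ← cs.wordProd_append, hred.eq, List.length_append]

end Parabolic

/-- A Coxeter matrix is even if all its off-diagonal entries are even; the entry `0`, which stands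
for an infinite label, is allowed. -/
def IsEven (M : CoxeterMatrix B) : Prop := Pairwise fun i j ↦ Even (M i j)

namespace IsEven

theorem isLiftable (hM : IsEven M) {G : Type*} [Monoid G] {f : B → G} (hf : ∀ i, f i * f i = 1)
    (hpair : ∀ i j, Commute (f i) (f j) ∨ (f i * f j) ^ M i j = 1) : M.IsLiftable f := by
  intro i j
  obtain rfl | hij := eq_or_ne i j
  · rw [M.diagonal, pow_one, hf]
  · obtain hcomm | hpow := hpair i j
    · obtain ⟨n, hn⟩ := hM hij
      rw [hn, ← two_mul, pow_mul, hcomm.mul_pow, sq, sq, hf, hf, one_mul, one_pow]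
    · exact hpow

theorem eq_of_isConj_simple (hM : IsEven M) {i j : B} (h : IsConj (s i) (s j)) : i = j := by
  classical
  let sign : B → ℤˣ := fun b ↦ if b = i then -1 else 1
  have hsign : M.IsLiftable sign :=
    hM.isLiftable (fun b ↦ Int.units_mul_self _) fun b b' ↦ .inl (Commute.all _ _)
  have hij : sign i = sign j := by
    simpa only [cs.lift_apply_simple hsign, isConj_iff_eq] using
      (cs.lift ⟨sign, hsign⟩).map_isConj h
  by_contra hne
  simp [sign, Ne.symm hne] at hij

theorem orderOf_simple_mul_simple (hM : IsEven M) (i j : B) : orderOf (s i * s j) = M i j := by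
  classical
  obtain rfl | hij := eq_or_ne i j
  · simp
  refine (orderOf_dvd_of_pow_eq_one (cs.simple_mul_simple_pow i j)).antisymm ?_
  -- Sending every other simple reflection to `1` extends to a map onto a dihedral group.
  let f : B → DihedralGroup (M i j) := fun b ↦ if b = i then .sr 0 else if b = j then .sr 1 else 1
  have hi : f i = .sr 0 := if_pos rfl
  have hj : f j = .sr 1 := (if_neg hij.symm).trans (if_pos rfl)
  have hone : ∀ b, b ≠ i → b ≠ j → f b = 1 := fun b hbi hbj ↦ (if_neg hbi).trans (if_neg hbj)
  have hsq : ∀ b, f b * f b = 1 := fun b ↦ by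
    unfold f
    split_ifs <;> simp
  have hpow : (f i * f j) ^ M i j = 1 := by
    rw [hi, hj, DihedralGroup.sr_mul_sr, sub_zero, DihedralGroup.r_one_pow_n]
  have hpow' : (f j * f i) ^ M j i = 1 :=
    mul_swap_pow_eq_one (hsq i) (hsq j) <|
      (congrArg ((f i * f j) ^ ·) (M.symmetric j i)).trans hpow
  have hf : M.IsLiftable f := by
    refine hM.isLiftable hsq fun a b ↦ ?_
    by_cases ha : a ≠ i ∧ a ≠ j
    · exact .inl (hone a ha.1 ha.2 ▸ .one_left _)
    by_cases hb : b ≠ i ∧ b ≠ j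
    · exact .inl (hone b hb.1 hb.2 ▸ .one_right _)
    obtain rfl | hab := eq_or_ne a b
    · exact .inl (.refl _)
    have hcases : (a = i ∧ b = j) ∨ (a = j ∧ b = i) := by grind
    obtain ⟨rfl, rfl⟩ | ⟨rfl, rfl⟩ := hcases
    · exact .inr hpow
    · exact .inr hpow'
  have hmap : cs.lift ⟨f, hf⟩ (s i * s j) = .r 1 := by
    rw [map_mul, cs.lift_apply_simple hf, cs.lift_apply_simple hf, hi, hj,
      DihedralGroup.sr_mul_sr, sub_zero]
  calc M i j = orderOf (cs.lift ⟨f, hf⟩ (s i * s j)) := by rw [hmap, DihedralGroup.orderOf_r_one]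
    _ ∣ orderOf (s i * s j) := orderOf_map_dvd _ _

theorem two_mul_half (hM : IsEven M) {i j : B} (hij : i ≠ j) : 2 * (M i j / 2) = M i j :=
  Nat.two_mul_div_two_of_even (hM hij)

theorem commute_simple_pow_half (hM : IsEven M) (i j : B) :
    Commute (s i) ((s i * s j) ^ (M i j / 2)) := by
  obtain rfl | hij := eq_or_ne i j
  · simp
  have h := (commute_zpow_mul_iff (cs.simple_mul_simple_self i) (cs.simple_mul_simple_self j)
    (M i j / 2 : ℕ)).2
  rw [← Nat.cast_ofNat, ← Nat.cast_mul, hM.two_mul_half hij] at h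
  simpa only [zpow_natCast] using h (by simp)

theorem pow_half_comm (hM : IsEven M) (i j : B) :
    (s j * s i) ^ (M j i / 2) = (s i * s j) ^ (M i j / 2) := by
  obtain rfl | hij := eq_or_ne i j
  · rfl
  rw [M.symmetric j i, mul_swap_eq_inv (cs.simple_mul_simple_self i) (cs.simple_mul_simple_self j),
    inv_pow, inv_eq_iff_mul_eq_one, ← pow_add, ← two_mul, hM.two_mul_half hij,
    cs.simple_mul_simple_pow]

theorem mem_closure_of_mem_parabolic_pair (hM : IsEven M) {i j : B} {d : W}
    (hd : d ∈ parabolic cs {i, j}) (hcomm : Commute (s i) d) :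
    d ∈ Subgroup.closure {s i, (s i * s j) ^ (M i j / 2)} := by
  have hi : s i ∈ Subgroup.closure {s i, (s i * s j) ^ (M i j / 2)} :=
    Subgroup.subset_closure (.inl rfl)
  have zpow_mem_of_commute : ∀ n : ℤ, Commute (s i) ((s i * s j) ^ n) →
      (s i * s j) ^ n ∈ Subgroup.closure {s i, (s i * s j) ^ (M i j / 2)} := by
    intro n hn
    obtain rfl | hij := eq_or_ne i j
    · simp
    rw [commute_zpow_mul_iff (cs.simple_mul_simple_self i) (cs.simple_mul_simple_self j),
      ← orderOf_dvd_iff_zpow_eq_one, hM.orderOf_simple_mul_simple, ← hM.two_mul_half hij,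
      Nat.cast_mul, Nat.cast_ofNat, mul_dvd_mul_iff_left two_ne_zero] at hn
    obtain ⟨c, rfl⟩ := hn
    rw [zpow_mul, zpow_natCast]
    exact zpow_mem (Subgroup.subset_closure (.inr rfl)) c
  rw [parabolic, Set.image_pair] at hd
  obtain ⟨n, rfl | rfl⟩ := exists_zpow_of_mem_closure_pair (cs.simple_mul_simple_self i)
    (cs.simple_mul_simple_self j) hd
  · exact zpow_mem_of_commute n hcomm
  · refine mul_mem (zpow_mem_of_commute n ?_) hi
    simpa using hcomm.mul_right (Commute.refl (s i))

theorem eq_simple_of_mul_eq_simple_mul (hM : IsEven M) {J : Set B} {i : B} {u t : W}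
    (hu : IsMinCosetRep cs J u) (ht : t ∈ parabolic cs J) (h : u * t = s i * u) : t = s i := by
  have hconj : IsConj t (s i) := isConj_iff.2 ⟨u, mul_inv_eq_of_eq_mul h⟩
  have hle : ℓ t ≤ 1 := by
    have := cs.length_mul_le (s i) u
    rw [← h, hu.length_mul ht, cs.length_simple] at this
    lia
  have hne : ℓ t ≠ 0 := by
    rw [Ne, cs.length_eq_zero_iff]
    rintro rfl
    have := cs.length_simple i
    rw [isConj_one_right.1 hconj, cs.length_one] at this
    exact zero_ne_one this
  obtain ⟨j, rfl⟩ := cs.length_eq_one_iff.1 (by lia : ℓ t = 1)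
  rw [hM.eq_of_isConj_simple cs hconj]

theorem exists_commute_isMinCosetRep_mul (hM : IsEven M) {J : Set B} {i : B} (hi : i ∈ J) {w : W}
    (hw : Commute (s i) w) :
    ∃ d ∈ parabolic cs J, IsMinCosetRep cs J (w * d) ∧ Commute (s i) d := by
  obtain ⟨d, hd, hmin⟩ := exists_isMinCosetRep_mul cs J w
  have ht : d⁻¹ * s i * d = s i := by
    refine hM.eq_simple_of_mul_eq_simple_mul cs hmin
      (mul_mem (mul_mem (inv_mem hd) (simple_mem_parabolic hi)) hd) ?_
    rw [← mul_assoc (s i), hw.eq]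
    group
  refine ⟨d, hd, hmin, ?_⟩
  rwa [mul_assoc, inv_mul_eq_iff_eq_mul] at ht

theorem mem_closure_of_commute_simple (hM : IsEven M) {i : B} {w : W} (hw : Commute (s i) w) :
    w ∈ Subgroup.closure
      (insert (s i) (Set.range fun j ↦ (s i * s j) ^ (M i j / 2))) := by
  induction hn : ℓ w using Nat.strong_induction_on generalizing w with
  | _ n ih =>
    obtain rfl | hne := eq_or_ne w 1
    · exact one_mem _
    obtain ⟨j, hj⟩ := cs.exists_rightDescent_of_ne_one hne
    obtain ⟨d, hd, hmin, hdcomm⟩ := hM.exists_commute_isMinCosetRep_mul cs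
      (J := {i, j}) (Set.mem_insert i _) hw
    have hdmem := hM.mem_closure_of_mem_parabolic_pair cs hd hdcomm
    have hlen : ℓ (w * d) < n := by
      have hle := hmin (d⁻¹ * s j) (mul_mem (inv_mem hd) (simple_mem_parabolic (.inr rfl)))
      rw [mul_assoc, mul_inv_cancel_left] at hle
      exact hn ▸ hle.trans_lt hj
    rw [← mul_inv_cancel_right w d]
    refine mul_mem (ih _ hlen (hw.mul_right hdcomm) rfl)
      (inv_mem (Subgroup.closure_mono ?_ hdmem))
    exact Set.insert_subset_insert (Set.singleton_subset_iff.2 ⟨j, rfl⟩)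

theorem centralizer_simple (hM : IsEven M) (i : B) :
    Subgroup.centralizer {s i} = Subgroup.closure
      (insert (s i) (Set.range fun j ↦ (s i * s j) ^ (M i j / 2))) := by
  refine le_antisymm (fun w hw ↦ hM.mem_closure_of_commute_simple cs
    (Subgroup.mem_centralizer_singleton_iff.1 hw).symm) ?_
  rw [Subgroup.closure_le]
  rintro _ (rfl | ⟨j, rfl⟩)
  · exact Subgroup.mem_centralizer_singleton_iff.2 rfl
  · exact Subgroup.mem_centralizer_singleton_iff.2 (hM.commute_simple_pow_half cs i j).symm

theorem centralizer_simple_of_forall_eq_or (hM : IsEven M) {i j k : B}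
    (hB : ∀ b, b = i ∨ b = j ∨ b = k) :
    Subgroup.centralizer {s i} = Subgroup.closure
      {s i, (s i * s j) ^ (M i j / 2), (s i * s k) ^ (M i k / 2)} := by
  have huniv : (Set.univ : Set B) = {i, j, k} := (Set.eq_univ_of_forall hB).symm
  rw [hM.centralizer_simple cs, ← Set.image_univ, huniv, Set.image_insert_eq, Set.image_pair,
    cs.simple_mul_simple_self, one_pow, Set.insert_comm, Subgroup.closure_insert_one]

end IsEven

section Triangle

variable {p q r : ℕ}

theorem lift_cgen_eq_one_of_mem_triRels {x : FreeGroup (Fin 3)} (hx : x ∈ triRels p q r) :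
    FreeGroup.lift (cgen p q r) x = 1 := by
  have hlift : FreeGroup.lift (cgen p q r) = PresentedGroup.mk (triRels p q r) :=
    FreeGroup.ext_hom _ _ fun _ ↦ FreeGroup.lift_apply_of
  exact (DFunLike.congr_fun hlift x).trans (PresentedGroup.one_of_mem hx)

theorem cgen_mul_self (j : Fin 3) : cgen p q r j * cgen p q r j = 1 := by
  have hj : FreeGroup.of j ^ 2 ∈ triRels p q r := by fin_cases j <;> simp [triRels]
  simpa [sq] using lift_cgen_eq_one_of_mem_triRels hj

theorem cgen_mul_cgen_pow_eq_one {i j : Fin 3} {n : ℕ}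
    (h : (FreeGroup.of i * FreeGroup.of j) ^ n ∈ triRels p q r) :
    (cgen p q r i * cgen p q r j) ^ n = 1 := by
  simpa using lift_cgen_eq_one_of_mem_triRels h

/-- The Coxeter matrix of the group `Δ(p, q, r)`; the label `0` stands for an infinite link
period. -/
def triangleMatrix (hp : p ≠ 1) (hq : q ≠ 1) (hr : r ≠ 1) : CoxeterMatrix (Fin 3) where
  M := !![1, p, r; p, 1, q; r, q, 1]
  isSymm := by ext i j; fin_cases i <;> fin_cases j <;> rfl
  diagonal i := by fin_cases i <;> rfl
  off_diagonal i j hij := by fin_cases i <;> fin_cases j <;> simp_all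

variable (hp : p ≠ 1) (hq : q ≠ 1) (hr : r ≠ 1)

theorem isEven_triangleMatrix (hp₂ : Even p) (hq₂ : Even q) (hr₂ : Even r) :
    IsEven (triangleMatrix hp hq hr) := by
  intro i j hij
  fin_cases i <;> fin_cases j <;> first | exact absurd rfl hij | assumption

theorem isLiftable_cgen : (triangleMatrix hp hq hr).IsLiftable (cgen p q r) := by
  have h01 : (cgen p q r 0 * cgen p q r 1) ^ p = 1 := cgen_mul_cgen_pow_eq_one (by simp [triRels])
  have h12 : (cgen p q r 1 * cgen p q r 2) ^ q = 1 := cgen_mul_cgen_pow_eq_one (by simp [triRels])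
  have h20 : (cgen p q r 2 * cgen p q r 0) ^ r = 1 := cgen_mul_cgen_pow_eq_one (by simp [triRels])
  have hdiag (j : Fin 3) : (cgen p q r j * cgen p q r j) ^ 1 = 1 := by rw [pow_one, cgen_mul_self]
  intro i j
  fin_cases i <;> fin_cases j
  exacts [hdiag 0, h01, mul_swap_pow_eq_one (cgen_mul_self 2) (cgen_mul_self 0) h20,
    mul_swap_pow_eq_one (cgen_mul_self 0) (cgen_mul_self 1) h01, hdiag 1, h12,
    h20, mul_swap_pow_eq_one (cgen_mul_self 1) (cgen_mul_self 2) h12, hdiag 2]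

theorem lift_simple_eq_one_of_mem_triRels :
    ∀ x ∈ triRels p q r, FreeGroup.lift (triangleMatrix hp hq hr).toCoxeterSystem.simple x = 1 := by
  have hpow := (triangleMatrix hp hq hr).toCoxeterSystem.simple_mul_simple_pow
  rintro _ (rfl | rfl | rfl | rfl | rfl | rfl)
  iterate 3
    rw [map_pow, FreeGroup.lift_apply_of, CoxeterSystem.simple_sq]
  all_goals rw [map_pow, map_mul, FreeGroup.lift_apply_of, FreeGroup.lift_apply_of]
  exacts [hpow 0 1, hpow 1 2, hpow 2 0]

/-- The canonical map from `Δ(p, q, r)` to the abstract Coxeter group of the same labels. -/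
def toCoxeterGroup : Tri p q r →* (triangleMatrix hp hq hr).Group :=
  PresentedGroup.toGroup (lift_simple_eq_one_of_mem_triRels hp hq hr)

theorem toCoxeterGroup_cgen (j : Fin 3) : toCoxeterGroup hp hq hr (cgen p q r j) =
    (triangleMatrix hp hq hr).toCoxeterSystem.simple j :=
  PresentedGroup.toGroup.of _

/-- `Δ(p, q, r)` as a Coxeter group, with the canonical generators as simple reflections. -/
noncomputable def triangleCoxeterSystem :
    CoxeterSystem (triangleMatrix hp hq hr) (Tri p q r) where
  mulEquiv := (toCoxeterGroup hp hq hr).toMulEquiv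
    ((triangleMatrix hp hq hr).toCoxeterSystem.lift ⟨_, isLiftable_cgen hp hq hr⟩)
    (PresentedGroup.ext fun j ↦
      (congrArg _ (toCoxeterGroup_cgen hp hq hr j)).trans
        (CoxeterSystem.lift_apply_simple _ (isLiftable_cgen hp hq hr) j))
    (CoxeterSystem.ext_simple _ fun j ↦
      (congrArg _ (CoxeterSystem.lift_apply_simple _ (isLiftable_cgen hp hq hr) j)).trans
        (toCoxeterGroup_cgen hp hq hr j))

theorem simple_triangleCoxeterSystem (j : Fin 3) :
    (triangleCoxeterSystem hp hq hr).simple j = cgen p q r j :=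
  CoxeterSystem.lift_apply_simple _ (isLiftable_cgen hp hq hr) j

end Triangle

end EvenCoxeter

theorem centralizer_all_even_general (k l m : ℕ) :
    ∀ c₀ c₁ c₂ : Tri (2 * k) (2 * l) (2 * m),
      c₀ = cgen _ _ _ 0 → c₁ = cgen _ _ _ 1 → c₂ = cgen _ _ _ 2 →
      Subgroup.centralizer {c₀} =
        Subgroup.closure {c₀, (c₀ * c₁) ^ k, (c₀ * c₂) ^ m} ∧
      Subgroup.centralizer {c₁} =
        Subgroup.closure {c₁, (c₀ * c₁) ^ k, (c₁ * c₂) ^ l} ∧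
      Subgroup.centralizer {c₂} =
        Subgroup.closure {c₂, (c₀ * c₂) ^ m, (c₁ * c₂) ^ l} := by
  have hp : 2 * k ≠ 1 := by lia
  have hq : 2 * l ≠ 1 := by lia
  have hr : 2 * m ≠ 1 := by lia
  let M := EvenCoxeter.triangleMatrix hp hq hr
  let cs := EvenCoxeter.triangleCoxeterSystem hp hq hr
  have hM : EvenCoxeter.IsEven M := EvenCoxeter.isEven_triangleMatrix hp hq hr
    (even_two_mul k) (even_two_mul l) (even_two_mul m)
  have h01 : M 0 1 / 2 = k := Nat.mul_div_cancel_left k two_pos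
  have h12 : M 1 2 / 2 = l := Nat.mul_div_cancel_left l two_pos
  have h02 : M 0 2 / 2 = m := Nat.mul_div_cancel_left m two_pos
  rintro _ _ _ rfl rfl rfl
  simp only [← EvenCoxeter.simple_triangleCoxeterSystem hp hq hr]
  refine ⟨?_, ?_, ?_⟩
  · rw [hM.centralizer_simple_of_forall_eq_or cs (j := 1) (k := 2) (by decide), h01, h02]
  · rw [hM.centralizer_simple_of_forall_eq_or cs (j := 0) (k := 2) (by decide),
      hM.pow_half_comm cs 0 1, h01, h12]
  · rw [hM.centralizer_simple_of_forall_eq_or cs (j := 0) (k := 1) (by decide),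
      hM.pow_half_comm cs 0 2, hM.pow_half_comm cs 1 2, h02, h12]

/-- in `Δ(2k, 2l, 2m)` (all link periods even), the centralizer of `c₀` is
generated by `c₀`, `(c₀c₁)^k`, `(c₀c₂)^m`; that of `c₁` by `c₁`, `(c₀c₁)^k`, `(c₁c₂)^l`;
and that of `c₂` by `c₂`, `(c₀c₂)^m`, `(c₁c₂)^l`. -/
theorem centralizer_all_even (k l m : ℕ) (hk : 1 ≤ k) (hl : 1 ≤ l) (hm : 1 ≤ m)
    (harea : (1 : ℚ) / (2 * k) + 1 / (2 * l) + 1 / (2 * m) < 1) :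
    ∀ c₀ c₁ c₂ : Tri (2 * k) (2 * l) (2 * m),
      c₀ = cgen _ _ _ 0 → c₁ = cgen _ _ _ 1 → c₂ = cgen _ _ _ 2 →
      Subgroup.centralizer {c₀} =
        Subgroup.closure {c₀, (c₀ * c₁) ^ k, (c₀ * c₂) ^ m} ∧
      Subgroup.centralizer {c₁} =
        Subgroup.closure {c₁, (c₀ * c₁) ^ k, (c₁ * c₂) ^ l} ∧
      Subgroup.centralizer {c₂} =
        Subgroup.closure {c₂, (c₀ * c₂) ^ m, (c₁ * c₂) ^ l} := by
  exact centralizer_all_even_general k l m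
end

section
/- Let p be a rational prime with p ≡ 1 (mod 6). Then there exist integers a and b such that p = a² + a·b + b². -/
/-!
If `p ≡ 1 (mod 6)`, then `3` divides the order of `(ZMod p)ˣ`, so there is a nontrivial cube root of
unity `t`, and `t² + t + 1 = 0` modulo `p`. Hence `p` divides `a² + ab + b²` whenever `a ≡ bt`.
Thue's pigeonhole argument provides such a pair, not both zero, with `a², b² ≤ p`, so that
`a² + ab + b²` is `p`, `2p` or `3p`. If it is `2p`, then `a` and `b` are even and so is `p`, whereas
`t² + t + 1` has no root modulo `2`. If it is `3p`, both bounds are attained and `p = a²` is the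
value of the form at `(a, 0)`.
-/

/-- Thue's lemma is the case where `G` is `ZMod n` and `g` is `1`. -/
theorem exists_zsmul_eq_zsmul_of_card_lt_mul {G : Type*} [AddGroup G] [Finite G] {X Y : ℕ}
    (hXY : Nat.card G < X * Y) (g h : G) :
    ∃ a b : ℤ, (a ≠ 0 ∨ b ≠ 0) ∧ |a| < X ∧ |b| < Y ∧ a • g = b • h := by
  have := Fintype.ofFinite G
  have hcard : Fintype.card G < Fintype.card (Fin X × Fin Y) := by
    simpa [Nat.card_eq_fintype_card] using hXY
  obtain ⟨⟨x, y⟩, ⟨x', y'⟩, hne, heq⟩ := Fintype.exists_ne_map_eq_of_card_lt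
    (fun z : Fin X × Fin Y ↦ -((z.1 : ℤ) • g) + (z.2 : ℤ) • h) hcard
  refine ⟨x' - x, y' - y, ?_, by grind, by grind, ?_⟩
  · contrapose! hne
    ext <;> grind
  · calc ((x' : ℤ) - x) • g = (x' : ℤ) • g + (-((x : ℤ) • g) + (y : ℤ) • h) + -((y : ℤ) • h) := by
          simp [sub_zsmul, add_assoc]
      _ = (x' : ℤ) • g + (-((x' : ℤ) • g) + (y' : ℤ) • h) + -((y : ℤ) • h) := by rw [heq]
      _ = ((y' : ℤ) - y) • h := by simp [sub_zsmul]

theorem exists_sq_le_sq_le_intCast_eq_intCast_mul {n : ℕ} [NeZero n] (t : ZMod n) :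
    ∃ a b : ℤ, (a ≠ 0 ∨ b ≠ 0) ∧ a ^ 2 ≤ n ∧ b ^ 2 ≤ n ∧ (a : ZMod n) = b * t := by
  have hcard : Nat.card (ZMod n) < (n.sqrt + 1) * (n.sqrt + 1) := by
    simpa using n.lt_succ_sqrt
  have sq_le {x : ℤ} (hx : |x| < (n.sqrt + 1 : ℕ)) : x ^ 2 ≤ n :=
    calc x ^ 2 ≤ (n.sqrt : ℤ) ^ 2 := sq_le_sq.mpr (by grind)
      _ ≤ n := mod_cast n.sqrt_le'
  obtain ⟨a, b, hne, ha, hb, hab⟩ := exists_zsmul_eq_zsmul_of_card_lt_mul hcard 1 t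
  exact ⟨a, b, hne, sq_le ha, sq_le hb, by simpa using hab⟩

theorem exists_sq_add_self_add_one_eq_zero {R : Type*} [CommRing R] [IsDomain R] [Finite Rˣ]
    (h : 3 ∣ Nat.card Rˣ) : ∃ t : R, t ^ 2 + t + 1 = 0 := by
  obtain ⟨u, hu⟩ := exists_prime_orderOf_dvd_card' 3 h
  have hroot : IsPrimitiveRoot (u : R) 3 :=
    IsPrimitiveRoot.coe_units_iff.mpr (IsPrimitiveRoot.iff_orderOf.mpr hu)
  have hsum := hroot.geom_sum_eq_zero (by norm_num)
  simp only [Finset.sum_range_succ, Finset.sum_range_zero] at hsum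
  exact ⟨u, by linear_combination hsum⟩

theorem odd_of_sq_add_self_add_one_eq_zero {n : ℕ} {t : ZMod n} (ht : t ^ 2 + t + 1 = 0) :
    Odd n := by
  by_contra hn
  let φ := ZMod.castHom (Nat.not_odd_iff_even.mp hn).two_dvd (ZMod 2)
  have hroot : φ t ^ 2 + φ t + 1 = 0 := by simpa using congrArg φ ht
  have hnoroot : ∀ s : ZMod 2, s ^ 2 + s + 1 ≠ 0 := by decide
  exact hnoroot _ hroot

theorem sq_add_mul_add_sq_pos {R : Type*} [CommRing R] [LinearOrder R] [IsStrictOrderedRing R]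
    {a b : R} (h : a ≠ 0 ∨ b ≠ 0) : 0 < a ^ 2 + a * b + b ^ 2 := by
  have hsum : 0 < a ^ 2 + b ^ 2 := by
    rcases h with ha | hb <;> positivity
  have htwice : 0 < 2 * (a ^ 2 + a * b + b ^ 2) :=
    calc 0 < (a + b) ^ 2 + (a ^ 2 + b ^ 2) := by positivity
      _ = 2 * (a ^ 2 + a * b + b ^ 2) := by ring
  exact pos_of_mul_pos_right htwice zero_le_two

theorem even_sq_add_mul_add_sq_iff {a b : ℤ} :
    Even (a ^ 2 + a * b + b ^ 2) ↔ Even a ∧ Even b := by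
  simp only [parity_simps]
  tauto

theorem exists_eq_sq_add_mul_add_sq_of_sq_add_self_add_one_eq_zero {n : ℕ} [NeZero n]
    {t : ZMod n} (ht : t ^ 2 + t + 1 = 0) : ∃ a b : ℤ, (n : ℤ) = a ^ 2 + a * b + b ^ 2 := by
  obtain ⟨a, b, hne, ha, hb, hab⟩ := exists_sq_le_sq_le_intCast_eq_intCast_mul t
  have hdvd : (n : ℤ) ∣ a ^ 2 + a * b + b ^ 2 := by
    rw [← ZMod.intCast_zmod_eq_zero_iff_dvd]
    push_cast
    rw [hab]
    linear_combination (b : ZMod n) ^ 2 * ht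
  obtain ⟨c, hc⟩ := hdvd
  have hn : (0 : ℤ) < n := mod_cast NeZero.pos n
  have hc_pos : 0 < c := pos_of_mul_pos_right (hc ▸ sq_add_mul_add_sq_pos hne) hn.le
  have hc_le : c ≤ 3 := by
    have : n * c ≤ (n : ℤ) * 3 := by linarith [sq_nonneg (a - b)]
    exact le_of_mul_le_mul_left this hn
  obtain rfl | rfl | rfl : c = 1 ∨ c = 2 ∨ c = 3 := by lia
  · exact ⟨a, b, by linarith⟩
  · have heven : Even (a ^ 2 + a * b + b ^ 2) := hc ▸ even_two.mul_left _
    obtain ⟨⟨r, rfl⟩, ⟨s, rfl⟩⟩ := even_sq_add_mul_add_sq_iff.mp heven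
    have : Even (n : ℤ) := ⟨r ^ 2 + r * s + s ^ 2, by linarith⟩
    exact absurd (mod_cast this) (Nat.not_even_iff_odd.mpr (odd_of_sq_add_self_add_one_eq_zero ht))
  · have hsq : (n : ℤ) = a ^ 2 := by linarith [sq_nonneg (a - b)]
    exact ⟨a, 0, by simpa using hsq⟩

/-- a rational prime `p ≡ 1 (mod 6)` is expressible as `a² + ab + b²`
for some integers `a`, `b`. -/
theorem prime_one_mod_six_eq_norm_form (p : ℕ) (hp : p.Prime) (hp6 : p % 6 = 1) :
    ∃ a b : ℤ, (p : ℤ) = a ^ 2 + a * b + b ^ 2 := by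
  have : Fact p.Prime := ⟨hp⟩
  have hdvd : 3 ∣ Nat.card (ZMod p)ˣ := by
    rw [Nat.card_eq_fintype_card, ZMod.card_units]
    lia
  obtain ⟨t, ht⟩ := exists_sq_add_self_add_one_eq_zero hdvd
  exact exists_eq_sq_add_mul_add_sq_of_sq_add_self_add_one_eq_zero ht
end

section
/- Let n be a positive integer. The group presented on three generators x, y, c with relators x^n, c⁴, x y x⁻¹ y⁻¹, c y c⁻¹ x⁻¹, and c x c⁻¹ y is isomorphic to the semidirect product (ZMod n × ZMod n) ⋊ ZMod 4, where the generator 1 of ZMod 4 acts on ZMod n × ZMod n by the automorphism (a, b) ↦ (b, −a); under the isomorphism, x, y, c correspond to ((1,0), 0), ((0,1), 0), ((0,0), 1) respectively. -/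
/-- Relators `x^n, c⁴, xyx⁻¹y⁻¹, cyc⁻¹x⁻¹, cxc⁻¹y` on generators `x = 0`, `y = 1`,
`c = 2`. -/
def relsA (n : ℕ) : Set (FreeGroup (Fin 3)) :=
  {FreeGroup.of 0 ^ n, FreeGroup.of 2 ^ 4,
   FreeGroup.of 0 * FreeGroup.of 1 * (FreeGroup.of 0)⁻¹ * (FreeGroup.of 1)⁻¹,
   FreeGroup.of 2 * FreeGroup.of 1 * (FreeGroup.of 2)⁻¹ * (FreeGroup.of 0)⁻¹,
   FreeGroup.of 2 * FreeGroup.of 0 * (FreeGroup.of 2)⁻¹ * FreeGroup.of 1}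

/-- The order-4 automorphism `(a, b) ↦ (b, −a)` of `ZMod n × ZMod n`. -/
def σA (n : ℕ) : (ZMod n × ZMod n) ≃+ (ZMod n × ZMod n) where
  toFun p := (p.2, -p.1)
  invFun p := (-p.2, p.1)
  left_inv p := by simp
  right_inv p := by simp
  map_add' p q := by simp [Prod.ext_iff]; ring

/-!
Both groups represent the functor sending a group `G` to the triples `(x, y, c)` in `G` that satisfy
the relations. For the semidirect product, `x` and `y` give a homomorphism on the translations and
`c` one on the rotations; their compatibility with the action only has to be checked on generators,
where it is the pair of relations `c y c⁻¹ = x` and `c x c⁻¹ = y⁻¹`.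
-/

section GeneratorCriteria

variable {N G H : Type*} [Group N] [Group G] [Group H] {φ : G →* MulAut N}
  {s : Set N} {t : Set G}

theorem semidirectProduct_compat_of_closure {f : N →* H} {g : G →* H}
    (hs : Subgroup.closure s = ⊤) (ht : Subgroup.closure t = ⊤)
    (hfg : ∀ b ∈ t, ∀ a ∈ s, f (φ b a) = g b * f a * (g b)⁻¹) (b : G) :
    f.comp (φ b).toMonoidHom = (MulAut.conj (g b)).toMonoidHom.comp f := by
  suffices h : ∀ a, f (φ b a) = g b * f a * (g b)⁻¹ from MonoidHom.ext h
  have hb : b ∈ Subgroup.closure t := ht ▸ Subgroup.mem_top b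
  induction hb using Subgroup.closure_induction with
  | mem b hb =>
    have : f.comp (φ b).toMonoidHom = (MulAut.conj (g b)).toMonoidHom.comp f :=
      MonoidHom.eq_of_eqOn_dense hs (hfg b hb)
    exact DFunLike.congr_fun this
  | one => simp
  | mul b₁ b₂ _ _ h₁ h₂ =>
    intro a
    rw [map_mul, MulAut.mul_apply, h₁, h₂, map_mul]
    group
  | inv b _ h =>
    intro a
    have hcancel : f a = g b * f (φ b⁻¹ a) * (g b)⁻¹ := by rw [← h, map_inv, MulAut.apply_inv_self]
    rw [hcancel, map_inv g]
    group

theorem semidirectProduct_hom_ext_of_closure {f g : N ⋊[φ] G →* H}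
    (hs : Subgroup.closure s = ⊤) (ht : Subgroup.closure t = ⊤)
    (hl : ∀ a ∈ s, f (SemidirectProduct.inl a) = g (SemidirectProduct.inl a))
    (hr : ∀ b ∈ t, f (SemidirectProduct.inr b) = g (SemidirectProduct.inr b)) : f = g :=
  SemidirectProduct.hom_ext (MonoidHom.eq_of_eqOn_dense hs hl) (MonoidHom.eq_of_eqOn_dense ht hr)

end GeneratorCriteria

open Multiplicative (ofAdd toAdd)

section PowersHom

theorem zpowers_ofAdd_one_zmod (m : ℕ) : Subgroup.zpowers (ofAdd (1 : ZMod m)) = ⊤ := by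
  refine (Subgroup.eq_top_iff' _).mpr fun a => ?_
  obtain ⟨i, hi⟩ := ZMod.intCast_surjective (toAdd a)
  exact ⟨i, by simp [← ofAdd_zsmul, hi]⟩

theorem closure_ofAdd_one_zmod (m : ℕ) :
    Subgroup.closure {ofAdd (1 : ZMod m)} = (⊤ : Subgroup (Multiplicative (ZMod m))) := by
  rw [← Subgroup.zpowers_eq_closure, zpowers_ofAdd_one_zmod]

theorem closure_ofAdd_basis_zmod_prod (m n : ℕ) :
    Subgroup.closure {ofAdd ((1 : ZMod m), (0 : ZMod n)), ofAdd ((0 : ZMod m), (1 : ZMod n))} =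
      (⊤ : Subgroup (Multiplicative (ZMod m × ZMod n))) := by
  refine (Subgroup.eq_top_iff' _).mpr fun p => Subgroup.mem_closure_pair.mpr ?_
  obtain ⟨i, hi⟩ := ZMod.intCast_surjective (toAdd p).1
  obtain ⟨j, hj⟩ := ZMod.intCast_surjective (toAdd p).2
  refine ⟨i, j, ?_⟩
  rw [← ofAdd_zsmul, ← ofAdd_zsmul, ← ofAdd_add]
  simp [hi, hj]

variable {G : Type*} [Group G] {m n : ℕ} {x y : G}

/-- The homomorphism from `ZMod m`, written multiplicatively, that sends the generator `1` to an
element `x` with `x ^ m = 1`. -/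
def zmodPowersHom (hx : x ^ m = 1) : Multiplicative (ZMod m) →* G :=
  AddMonoidHom.toMultiplicativeLeft <| ZMod.lift m
    ⟨zmultiplesHom (Additive G) (Additive.ofMul x), by simp [← ofMul_pow, hx]⟩

theorem zmodPowersHom_ofAdd_one (hx : x ^ m = 1) : zmodPowersHom hx (ofAdd 1) = x := by
  simpa [zmodPowersHom] using congrArg Additive.toMul (ZMod.lift_coe m
    ⟨zmultiplesHom (Additive G) (Additive.ofMul x), by simp [← ofMul_pow, hx]⟩ 1)

theorem commute_zmodPowersHom (hx : x ^ m = 1) (hy : y ^ n = 1) (hxy : Commute x y)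
    (a : Multiplicative (ZMod m)) (b : Multiplicative (ZMod n)) :
    Commute (zmodPowersHom hx a) (zmodPowersHom hy b) := by
  obtain ⟨i, rfl⟩ : a ∈ Subgroup.zpowers (ofAdd 1) := zpowers_ofAdd_one_zmod m ▸ Subgroup.mem_top a
  obtain ⟨j, rfl⟩ : b ∈ Subgroup.zpowers (ofAdd 1) := zpowers_ofAdd_one_zmod n ▸ Subgroup.mem_top b
  simpa only [map_zpow, zmodPowersHom_ofAdd_one] using hxy.zpow_zpow i j

/-- The homomorphism from `ZMod m × ZMod n`, written multiplicatively, that sends the standard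
generators to commuting elements `x` and `y` with `x ^ m = 1` and `y ^ n = 1`. -/
def zmodProdPowersHom (hx : x ^ m = 1) (hy : y ^ n = 1) (hxy : Commute x y) :
    Multiplicative (ZMod m × ZMod n) →* G :=
  ((zmodPowersHom hx).noncommCoprod (zmodPowersHom hy) (commute_zmodPowersHom hx hy hxy)).comp
    (MulEquiv.prodMultiplicative (ZMod m) (ZMod n)).toMonoidHom

theorem zmodProdPowersHom_ofAdd_one_zero (hx : x ^ m = 1) (hy : y ^ n = 1) (hxy : Commute x y) :
    zmodProdPowersHom hx hy hxy (ofAdd (1, 0)) = x := by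
  simp [zmodProdPowersHom, MulEquiv.prodMultiplicative, zmodPowersHom_ofAdd_one]

theorem zmodProdPowersHom_ofAdd_zero_one (hx : x ^ m = 1) (hy : y ^ n = 1) (hxy : Commute x y) :
    zmodProdPowersHom hx hy hxy (ofAdd (0, 1)) = y := by
  simp [zmodProdPowersHom, MulEquiv.prodMultiplicative, zmodPowersHom_ofAdd_one]

end PowersHom

/-- The triples `(x, y, c)` of elements of a group that satisfy the relations `relsA n`, solved for
the conjugates of `x` and `y` by `c`. -/
structure IsRelATriple {G : Type*} [Group G] (n : ℕ) (x y c : G) : Prop where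
  pow_eq_one : x ^ n = 1
  pow_four_eq_one : c ^ 4 = 1
  commute : Commute x y
  conj_right : c * y * c⁻¹ = x
  conj_left : c * x * c⁻¹ = y⁻¹

theorem lift_relsA_eq_one_iff {G : Type*} [Group G] {n : ℕ} {f : Fin 3 → G} :
    (∀ r ∈ relsA n, FreeGroup.lift f r = 1) ↔ IsRelATriple n (f 0) (f 1) (f 2) := by
  simp only [relsA, Set.forall_mem_insert, Set.mem_singleton_iff, forall_eq, map_mul, map_pow,
    map_inv, FreeGroup.lift_apply_of]
  rw [mul_inv_eq_one, mul_inv_eq_iff_eq_mul, mul_inv_eq_one, mul_eq_one_iff_eq_inv]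
  exact ⟨fun ⟨hx, hc, hxy, hcy, hcx⟩ => ⟨hx, hc, hxy, hcy, hcx⟩,
    fun ⟨hx, hc, hxy, hcy, hcx⟩ => ⟨hx, hc, hxy, hcy, hcx⟩⟩

theorem isRelATriple_presentedGroup (n : ℕ) :
    IsRelATriple n (PresentedGroup.of 0 : PresentedGroup (relsA n)) (PresentedGroup.of 1)
      (PresentedGroup.of 2) := by
  have hmk : FreeGroup.lift PresentedGroup.of = PresentedGroup.mk (relsA n) :=
    FreeGroup.ext_hom _ _ fun _ => FreeGroup.lift_apply_of
  exact lift_relsA_eq_one_iff.mp fun r hr => hmk ▸ PresentedGroup.one_of_mem hr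

section QuarterTurn

variable {n : ℕ} {φ : Multiplicative (ZMod 4) →* MulAut (Multiplicative (ZMod n × ZMod n))}

theorem quarterTurn_ofAdd_one_zero (hφ : φ (ofAdd 1) = AddEquiv.toMultiplicative (σA n)) :
    φ (ofAdd 1) (ofAdd (1, 0)) = (ofAdd (0, 1))⁻¹ := by
  simp [hφ, σA, ← ofAdd_neg]

theorem quarterTurn_ofAdd_zero_one (hφ : φ (ofAdd 1) = AddEquiv.toMultiplicative (σA n)) :
    φ (ofAdd 1) (ofAdd (0, 1)) = ofAdd (1, 0) := by
  simp [hφ, σA]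

theorem isRelATriple_semidirectProduct
    (hφ : φ (ofAdd 1) = AddEquiv.toMultiplicative (σA n)) :
    IsRelATriple n (SemidirectProduct.inl (φ := φ) (ofAdd (1, 0)))
      (SemidirectProduct.inl (ofAdd (0, 1))) (SemidirectProduct.inr (ofAdd 1)) where
  pow_eq_one := by
    rw [← map_pow, ← ofAdd_nsmul, Prod.smul_mk, nsmul_one, ZMod.natCast_self, smul_zero,
      Prod.mk_zero_zero, ofAdd_zero, map_one]
  pow_four_eq_one := by
    rw [← map_pow, ← ofAdd_nsmul, show 4 • (1 : ZMod 4) = 0 by decide, ofAdd_zero, map_one]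
  commute := (Commute.all _ _).map SemidirectProduct.inl
  conj_right := by
    rw [← map_inv, ← SemidirectProduct.inl_aut, quarterTurn_ofAdd_zero_one hφ]
  conj_left := by
    rw [← map_inv, ← SemidirectProduct.inl_aut, quarterTurn_ofAdd_one_zero hφ, map_inv]

end QuarterTurn

namespace IsRelATriple

variable {G : Type*} [Group G] {n : ℕ} {x y c : G}

theorem right_pow_eq_one (h : IsRelATriple n x y c) : y ^ n = 1 := by
  have hconj : (c * y * c⁻¹) ^ n = 1 := h.conj_right.symm ▸ h.pow_eq_one
  rwa [conj_pow, conj_eq_one_iff] at hconj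

variable {φ : Multiplicative (ZMod 4) →* MulAut (Multiplicative (ZMod n × ZMod n))}

/-- The homomorphism from the semidirect product that sends the standard generators to the entries
of a triple satisfying the relations. -/
def semidirectLift (h : IsRelATriple n x y c)
    (hφ : φ (ofAdd 1) = AddEquiv.toMultiplicative (σA n)) :
    Multiplicative (ZMod n × ZMod n) ⋊[φ] Multiplicative (ZMod 4) →* G :=
  SemidirectProduct.lift (zmodProdPowersHom h.pow_eq_one h.right_pow_eq_one h.commute)
    (zmodPowersHom h.pow_four_eq_one) <|
    semidirectProduct_compat_of_closure (closure_ofAdd_basis_zmod_prod n n)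
      (closure_ofAdd_one_zmod 4) <| by
      rintro _ rfl _ (rfl | rfl)
      · rw [quarterTurn_ofAdd_one_zero hφ, map_inv, zmodProdPowersHom_ofAdd_one_zero,
          zmodProdPowersHom_ofAdd_zero_one, zmodPowersHom_ofAdd_one, h.conj_left]
      · rw [quarterTurn_ofAdd_zero_one hφ, zmodProdPowersHom_ofAdd_one_zero,
          zmodProdPowersHom_ofAdd_zero_one, zmodPowersHom_ofAdd_one, h.conj_right]

variable (h : IsRelATriple n x y c) (hφ : φ (ofAdd 1) = AddEquiv.toMultiplicative (σA n))

theorem semidirectLift_inl_one_zero :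
    h.semidirectLift hφ (SemidirectProduct.inl (ofAdd (1, 0))) = x :=
  (SemidirectProduct.lift_inl ..).trans (zmodProdPowersHom_ofAdd_one_zero ..)

theorem semidirectLift_inl_zero_one :
    h.semidirectLift hφ (SemidirectProduct.inl (ofAdd (0, 1))) = y :=
  (SemidirectProduct.lift_inl ..).trans (zmodProdPowersHom_ofAdd_zero_one ..)

theorem semidirectLift_inr_one :
    h.semidirectLift hφ (SemidirectProduct.inr (ofAdd 1)) = c :=
  (SemidirectProduct.lift_inr ..).trans (zmodPowersHom_ofAdd_one _)

end IsRelATriple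

/-- the group presented by `⟨x, y, c ∣ x^n, c⁴, [x,y], cyc⁻¹x⁻¹, cxc⁻¹y⟩`
is isomorphic to `(ZMod n × ZMod n) ⋊ ZMod 4`, where `1 ∈ ZMod 4` acts by
`(a, b) ↦ (b, −a)`, with `x, y, c` corresponding to `((1,0),0)`, `((0,1),0)`,
`((0,0),1)`. -/
theorem presentedGroup_A_iso_semidirect (n : ℕ) (hn : 1 ≤ n)
    (φ : Multiplicative (ZMod 4) →* MulAut (Multiplicative (ZMod n × ZMod n)))
    (hφ : φ (Multiplicative.ofAdd (1 : ZMod 4)) = AddEquiv.toMultiplicative (σA n)) :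
    ∃ e : PresentedGroup (relsA n) ≃*
        (Multiplicative (ZMod n × ZMod n) ⋊[φ] Multiplicative (ZMod 4)),
      e (PresentedGroup.of 0) =
        SemidirectProduct.inl (Multiplicative.ofAdd ((1 : ZMod n), (0 : ZMod n))) ∧
      e (PresentedGroup.of 1) =
        SemidirectProduct.inl (Multiplicative.ofAdd ((0 : ZMod n), (1 : ZMod n))) ∧
      e (PresentedGroup.of 2) =
        SemidirectProduct.inr (Multiplicative.ofAdd (1 : ZMod 4)) := by
  have hP := isRelATriple_presentedGroup n
  have hS := isRelATriple_semidirectProduct hφ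
  let F := PresentedGroup.toGroup (lift_relsA_eq_one_iff (f := ![_, _, _]).mpr hS)
  let K := hP.semidirectLift hφ
  have hF₀ : F (.of 0) = .inl (ofAdd (1, 0)) := PresentedGroup.toGroup.of _
  have hF₁ : F (.of 1) = .inl (ofAdd (0, 1)) := PresentedGroup.toGroup.of _
  have hF₂ : F (.of 2) = .inr (ofAdd 1) := PresentedGroup.toGroup.of _
  have hKx : K (.inl (ofAdd (1, 0))) = .of 0 := hP.semidirectLift_inl_one_zero hφ
  have hKy : K (.inl (ofAdd (0, 1))) = .of 1 := hP.semidirectLift_inl_zero_one hφ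
  have hKc : K (.inr (ofAdd 1)) = .of 2 := hP.semidirectLift_inr_one hφ
  have hKF : K.comp F = MonoidHom.id _ := by
    refine PresentedGroup.ext (Fin.forall_fin_succ.mpr ?_)
    simp [Fin.forall_fin_two, hF₀, hF₁, hF₂, hKx, hKy, hKc]
  have hFK : F.comp K = MonoidHom.id _ := by
    refine semidirectProduct_hom_ext_of_closure (closure_ofAdd_basis_zmod_prod n n)
      (closure_ofAdd_one_zmod 4) ?_ ?_ <;>
    simp [hF₀, hF₁, hF₂, hKx, hKy, hKc]
  exact ⟨MonoidHom.toMulEquiv F K hKF hFK, hF₀, hF₁, hF₂⟩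
end
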